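/- Let 0<r<1, 1≤p≤∞, α>0 and β∈ℝ, and let p' satisfy 1/p+1/p'=1. Then for every integer n ≥ n₀(α,r,p) one has E_n(C^{α,r}_{β,p})_C = e^{-α n^r} n^{(1-r)/p} [ (‖cos t‖_{p'} / (π^{1+1/p'} (αr)^{1/p})) · J_{p'}(π n^{1-r}/(αr)) + γ_n · ( (1/(αr)^{1+1/p}) · J_{p'}(π n^{1-r}/(αr)) · n^{-r} + n^{-(1-r)/p} ) ], where the quantity γ_n = γ_n(α,r,β,p) satisfies |γ_n| ≤ (14π)². -/

import Mathlib

open MeasureTheory Real Filter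
open scoped ENNReal

/-- The generalized Poisson kernel `P_{α,r,β}(t) = Σ_{k=1}^∞ e^{-α k^r} cos(kt − βπ/2)`. -/
noncomputable def genPoissonKernel (α r β : ℝ) (t : ℝ) : ℝ :=
  ∑' k : ℕ, Real.exp (-α * ((k : ℝ) + 1) ^ r) * Real.cos (((k : ℝ) + 1) * t - β * π / 2)

/-- Fourier cosine coefficient `a_k = (1/π)∫_{-π}^{π} f(t) cos(kt) dt`. -/
noncomputable def fourierCoefA (f : ℝ → ℝ) (k : ℕ) : ℝ :=
  (1 / π) * ∫ t in (-π)..π, f t * Real.cos (k * t)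

/-- Fourier sine coefficient `b_k = (1/π)∫_{-π}^{π} f(t) sin(kt) dt`. -/
noncomputable def fourierCoefB (f : ℝ → ℝ) (k : ℕ) : ℝ :=
  (1 / π) * ∫ t in (-π)..π, f t * Real.sin (k * t)

/-- Partial Fourier sum of order `m` of `f`. -/
noncomputable def fourierSum (m : ℕ) (f : ℝ → ℝ) (x : ℝ) : ℝ :=
  fourierCoefA f 0 / 2 +
    ∑ k ∈ Finset.Icc 1 m, (fourierCoefA f k * Real.cos (k * x) + fourierCoefB f k * Real.sin (k * x))

/-- The class `C^{α,r}_{β,p}` of generalized Poisson integrals. -/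
def poissonClass (α r β : ℝ) (p : ℝ≥0∞) : Set (ℝ → ℝ) :=
  {f | (∀ x, f (x + 2 * π) = f x) ∧ ∃ a₀ : ℝ, ∃ φ : ℝ → ℝ,
    (∀ x, φ (x + 2 * π) = φ x) ∧
    eLpNorm φ p (volume.restrict (Set.Ioc (0 : ℝ) (2 * π))) ≤ 1 ∧
    (∫ t in (0 : ℝ)..(2 * π), φ t) = 0 ∧
    ∀ x, f x = a₀ / 2 + (1 / π) * ∫ t in (-π)..π, genPoissonKernel α r β (x - t) * φ t}

/-- `E_n(C^{α,r}_{β,p})_C`: uniform deviation of Fourier sums of order `n-1` on the class. -/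
noncomputable def EnC (α r β : ℝ) (p : ℝ≥0∞) (n : ℕ) : ℝ :=
  ⨆ f ∈ poissonClass α r β p, ⨆ x : ℝ, |f x - fourierSum (n - 1) f x|

/-- `J_s(v) = ‖1/√(t²+1)‖_{L_s[0,v]}`. -/
noncomputable def Jfun (s : ℝ≥0∞) (v : ℝ) : ℝ :=
  (eLpNorm (fun t : ℝ => 1 / Real.sqrt (t ^ 2 + 1)) s (volume.restrict (Set.Ioc (0 : ℝ) v))).toReal

/-- `‖cos‖_{L_s}` over a period. -/
noncomputable def cosNorm (s : ℝ≥0∞) : ℝ :=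
  (eLpNorm (fun t : ℝ => Real.cos t) s (volume.restrict (Set.Ioc (0 : ℝ) (2 * π)))).toReal

/-- `n₀(α,r,p)`: the smallest positive integer satisfying condition (n_p). -/
noncomputable def n₀ (α r : ℝ) (p : ℝ≥0∞) : ℕ :=
  sInf {n : ℕ | 0 < n ∧
    1 / (α * r) * (n : ℝ) ^ (-r) + α * r * (if p = ∞ then 1 else p.toReal) * (n : ℝ) ^ (-(1 - r)) ≤
      (if p = 1 then 1 / 14 else if p = ∞ then 1 / (3 * π) ^ 3
        else (1 / (3 * π) ^ 3) * (p.toReal - 1) / p.toReal)}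

/-!
For `f` in the class, `f - S_{n-1} f` is the convolution of `φ / π` with the tail
`∑_{k ≥ n} e^{-α k^r} cos (k t - βπ/2)` of the kernel, so the deviation is a dual norm of the tail
over mean-zero functions of the unit ball of `L_p`.

Near `k = n` the coefficients decay like a geometric progression of ratio `e^{-δ}`, where
`δ = α r n^{-(1-r)}`. Summation by parts shows that the tail, divided by `e^{-α n^r}`, is
`Re (e^{i(n t - βπ/2)} / (δ - i t))` up to an error `O(1) + O(ε) / |δ - i t|` with
`ε = n^{-r} / (α r) = 1 / (n δ)`. Since `1 / (δ - i t)` varies slowly on the scale `1 / n`, its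
modulus and argument may be frozen on each of `n` equal subintervals of the period. The resulting
step wave runs through one full period of the cosine on every subinterval, so its `L_{p'}` norm is
the product of the `L_{p'}` mean of `cos` and a Riemann sum for the norm of `1 / |δ - i t|`, and
its Hölder extremal function has mean zero, which gives the lower bound for `p > 1`. For `p = 1`
the extremal function is replaced by two opposite point masses at a crest and a trough of the wave.
Rescaling by `δ` turns the norm of `1 / |δ - i t|` into `J_{p'}(π / δ)`.

Functions `φ` that are not measurable are admitted in the class. The kernel is real-analytic off
`2πℤ`, hence nonzero almost everywhere, so they contribute only constants.
-/

/-! ### Trigonometric series and their Fourier sums -/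

lemma integral_cos_int_mul {m : ℤ} (hm : m ≠ 0) : ∫ t in (-π)..π, cos (m * t) = 0 := by
  have hm' : (m : ℝ) ≠ 0 := by exact_mod_cast hm
  rw [intervalIntegral.integral_comp_mul_left _ hm', integral_cos]
  simp [sin_int_mul_pi]

lemma integral_sin_int_mul (m : ℤ) : ∫ t in (-π)..π, sin (m * t) = 0 := by
  rcases eq_or_ne (m : ℝ) 0 with hm | hm
  · simp [hm]
  · rw [intervalIntegral.integral_comp_mul_left _ hm, integral_sin]
    simp

lemma integral_cos_nat_mul_cos_nat {i : ℕ} (hi : i ≠ 0) (j : ℕ) :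
    ∫ t in (-π)..π, cos (i * t) * cos (j * t) = if i = j then π else 0 := by
  have product_to_sum (t : ℝ) : cos (i * t) * cos (j * t)
      = (cos (((i - j : ℤ) : ℝ) * t) + cos (((i + j : ℤ) : ℝ) * t)) / 2 := by
    push_cast
    rw [sub_mul, add_mul, cos_sub, cos_add]
    ring
  simp_rw [product_to_sum]
  rw [intervalIntegral.integral_div, intervalIntegral.integral_add
    (Continuous.intervalIntegrable (by fun_prop) _ _)
    (Continuous.intervalIntegrable (by fun_prop) _ _), integral_cos_int_mul (m := i + j) (by lia)]
  split_ifs with h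
  · simp [h]
  · rw [integral_cos_int_mul (m := i - j) (by lia)]
    simp

lemma integral_sin_nat_mul_sin_nat {i : ℕ} (hi : i ≠ 0) (j : ℕ) :
    ∫ t in (-π)..π, sin (i * t) * sin (j * t) = if i = j then π else 0 := by
  have product_to_sum (t : ℝ) : sin (i * t) * sin (j * t)
      = (cos (((i - j : ℤ) : ℝ) * t) - cos (((i + j : ℤ) : ℝ) * t)) / 2 := by
    push_cast
    rw [sub_mul, add_mul, cos_sub, cos_add]
    ring
  simp_rw [product_to_sum]
  rw [intervalIntegral.integral_div, intervalIntegral.integral_sub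
    (Continuous.intervalIntegrable (by fun_prop) _ _)
    (Continuous.intervalIntegrable (by fun_prop) _ _), integral_cos_int_mul (m := i + j) (by lia)]
  split_ifs with h
  · simp [h]
  · rw [integral_cos_int_mul (m := i - j) (by lia)]
    simp

lemma integral_sin_nat_mul_cos_nat (i j : ℕ) :
    ∫ t in (-π)..π, sin (i * t) * cos (j * t) = 0 := by
  have product_to_sum (t : ℝ) : sin (i * t) * cos (j * t)
      = (sin (((i - j : ℤ) : ℝ) * t) + sin (((i + j : ℤ) : ℝ) * t)) / 2 := by
    push_cast
    rw [sub_mul, add_mul, sin_sub, sin_add]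
    ring
  simp_rw [product_to_sum]
  rw [intervalIntegral.integral_div, intervalIntegral.integral_add
    (Continuous.intervalIntegrable (by fun_prop) _ _)
    (Continuous.intervalIntegrable (by fun_prop) _ _), integral_sin_int_mul, integral_sin_int_mul]
  simp

/-- The `k`-th term `u k cos ((k + 1) x) + v k sin ((k + 1) x)` of a trigonometric series without
constant term; the index is shifted so that the frequencies are `1, 2, …`. -/
noncomputable def trigTerm (u v : ℕ → ℝ) (k : ℕ) (x : ℝ) : ℝ :=
  u k * cos ((k + 1 : ℕ) * x) + v k * sin ((k + 1 : ℕ) * x)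

/-- The trigonometric series with constant term `a / 2` and terms `trigTerm u v`. -/
noncomputable def trigSeries (a : ℝ) (u v : ℕ → ℝ) (x : ℝ) : ℝ :=
  a / 2 + ∑' k, trigTerm u v k x

@[fun_prop]
lemma continuous_trigTerm (u v : ℕ → ℝ) (k : ℕ) : Continuous (trigTerm u v k) := by
  unfold trigTerm
  fun_prop

lemma abs_trigTerm_le (u v : ℕ → ℝ) (k : ℕ) (x : ℝ) : |trigTerm u v k x| ≤ |u k| + |v k| := by
  refine (abs_add_le _ _).trans ?_
  rw [abs_mul, abs_mul]
  exact add_le_add (mul_le_of_le_one_right (abs_nonneg _) (abs_cos_le_one _))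
    (mul_le_of_le_one_right (abs_nonneg _) (abs_sin_le_one _))

lemma integral_trigTerm_mul (u v : ℕ → ℝ) (k : ℕ) {w : ℝ → ℝ} (hw : Continuous w) :
    ∫ t in (-π)..π, trigTerm u v k t * w t
      = u k * (∫ t in (-π)..π, cos ((k + 1 : ℕ) * t) * w t)
        + v k * ∫ t in (-π)..π, sin ((k + 1 : ℕ) * t) * w t := by
  rw [← intervalIntegral.integral_const_mul, ← intervalIntegral.integral_const_mul,
    ← intervalIntegral.integral_add (Continuous.intervalIntegrable (by fun_prop) _ _)
      (Continuous.intervalIntegrable (by fun_prop) _ _)]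
  congr with t
  rw [trigTerm]
  ring

section TrigSeries

variable {u v : ℕ → ℝ} (hu : Summable u) (hv : Summable v) (a : ℝ)
include hu hv

lemma summable_trigTerm (x : ℝ) : Summable (trigTerm u v · x) :=
  Summable.of_norm_bounded (hu.abs.add hv.abs) (abs_trigTerm_le u v · x)

lemma continuous_tsum_trigTerm : Continuous fun x ↦ ∑' k, trigTerm u v k x :=
  continuous_tsum (continuous_trigTerm u v) (hu.abs.add hv.abs) (abs_trigTerm_le u v)

lemma hasSum_integral_trigTerm_mul {w : ℝ → ℝ} (hw : Continuous w) (hw1 : ∀ t, |w t| ≤ 1) :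
    HasSum (fun k ↦ ∫ t in (-π)..π, trigTerm u v k t * w t)
      (∫ t in (-π)..π, (∑' k, trigTerm u v k t) * w t) := by
  refine intervalIntegral.hasSum_integral_of_dominated_convergence (fun k _ ↦ |u k| + |v k|)
    (fun k ↦ Continuous.aestronglyMeasurable (by fun_prop)) (fun k ↦ .of_forall fun t _ ↦ ?_)
    (.of_forall fun _ _ ↦ hu.abs.add hv.abs) (by simp)
    (.of_forall fun t _ ↦ (summable_trigTerm hu hv t).hasSum.mul_right (w t))
  rw [norm_mul]
  exact (mul_le_of_le_one_right (norm_nonneg _) (hw1 t)).trans (abs_trigTerm_le u v k t)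

lemma integral_trigSeries_mul {w : ℝ → ℝ} (hw : Continuous w) (hw1 : ∀ t, |w t| ≤ 1) :
    ∫ t in (-π)..π, trigSeries a u v t * w t = a / 2 * (∫ t in (-π)..π, w t)
      + ∑' k, (u k * (∫ t in (-π)..π, cos ((k + 1 : ℕ) * t) * w t)
        + v k * ∫ t in (-π)..π, sin ((k + 1 : ℕ) * t) * w t) := by
  have hcont := continuous_tsum_trigTerm hu hv
  simp_rw [← integral_trigTerm_mul u v _ hw, (hasSum_integral_trigTerm_mul hu hv hw hw1).tsum_eq,
    trigSeries, add_mul]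
  rw [intervalIntegral.integral_add (Continuous.intervalIntegrable (by fun_prop) _ _)
    (Continuous.intervalIntegrable (by fun_prop) _ _), intervalIntegral.integral_const_mul]

lemma fourierCoefA_trigSeries_zero : fourierCoefA (trigSeries a u v) 0 = a := by
  rw [fourierCoefA, integral_trigSeries_mul hu hv a (w := fun t ↦ cos ((0 : ℕ) * t)) (by fun_prop)
    (fun t ↦ abs_cos_le_one _)]
  simp_rw [integral_sin_nat_mul_cos_nat,
    fun k ↦ integral_cos_nat_mul_cos_nat (i := k + 1) (by simp) 0]
  simp only [CharP.cast_eq_zero, zero_mul, cos_zero, intervalIntegral.integral_const,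
    sub_neg_eq_add, smul_eq_mul, mul_one, Nat.add_eq_zero_iff, one_ne_zero, and_false, ↓reduceIte,
    mul_zero, add_zero, tsum_zero]
  field

lemma fourierCoefA_trigSeries_succ (j : ℕ) : fourierCoefA (trigSeries a u v) (j + 1) = u j := by
  have hmean : ∫ t in (-π)..π, cos ((j + 1 : ℕ) * t) = 0 :=
    mod_cast integral_cos_int_mul (m := (j + 1 : ℕ)) (by lia)
  rw [fourierCoefA, integral_trigSeries_mul hu hv a (by fun_prop) (fun t ↦ abs_cos_le_one _), hmean]
  simp_rw [integral_sin_nat_mul_cos_nat,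
    fun k ↦ integral_cos_nat_mul_cos_nat (i := k + 1) (by simp) (j + 1)]
  rw [tsum_eq_single j fun k hk ↦ by simp [hk]]
  simp only [mul_zero, ↓reduceIte, add_zero, zero_add]
  field

lemma fourierCoefB_trigSeries_succ (j : ℕ) : fourierCoefB (trigSeries a u v) (j + 1) = v j := by
  have hmean : ∫ t in (-π)..π, sin ((j + 1 : ℕ) * t) = 0 :=
    mod_cast integral_sin_int_mul (j + 1 : ℕ)
  rw [fourierCoefB, integral_trigSeries_mul hu hv a (by fun_prop) (fun t ↦ abs_sin_le_one _), hmean]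
  simp_rw [mul_comm (cos _), integral_sin_nat_mul_cos_nat,
    fun k ↦ integral_sin_nat_mul_sin_nat (i := k + 1) (by simp) (j + 1)]
  rw [tsum_eq_single j fun k hk ↦ by simp [hk]]
  simp only [mul_zero, ↓reduceIte, zero_add]
  field

lemma trigSeries_sub_fourierSum (N : ℕ) (x : ℝ) :
    trigSeries a u v x - fourierSum N (trigSeries a u v) x = ∑' k, trigTerm u v (k + N) x := by
  have hsum : fourierSum N (trigSeries a u v) x
      = a / 2 + ∑ k ∈ Finset.range N, trigTerm u v k x := by
    rw [fourierSum, fourierCoefA_trigSeries_zero hu hv, Finset.range_eq_Ico,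
      ← Finset.Ico_add_one_right_eq_Icc, ← Finset.sum_Ico_add' _ 0 N 1]
    simp_rw [fourierCoefA_trigSeries_succ hu hv, fourierCoefB_trigSeries_succ hu hv, trigTerm]
  rw [hsum, trigSeries, ← (summable_trigTerm hu hv x).sum_add_tsum_nat_add N]
  ring

end TrigSeries

/-! ### Convolution with a cosine series -/

/-- The `2π`-periodic tail `∑_{k ≥ N + 1} c_{k-1} cos (k t - b)` of a cosine series with phase `b`;
the coefficient of frequency `k + 1` is `c k`. -/
noncomputable def cosTail (c : ℕ → ℝ) (b : ℝ) (N : ℕ) (t : ℝ) : ℝ :=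
  ∑' k : ℕ, c (k + N) * cos ((k + N + 1 : ℕ) * t - b)

/-- The cosine coefficients of `∑ c_{k-1} cos (k · - b) ∗ φ`. -/
noncomputable def convCoefCos (c : ℕ → ℝ) (b : ℝ) (φ : ℝ → ℝ) (k : ℕ) : ℝ :=
  c k * ∫ t in (-π)..π, cos ((k + 1 : ℕ) * t + b) * φ t

/-- The sine coefficients of `∑ c_{k-1} cos (k · - b) ∗ φ`. -/
noncomputable def convCoefSin (c : ℕ → ℝ) (b : ℝ) (φ : ℝ → ℝ) (k : ℕ) : ℝ :=
  c k * ∫ t in (-π)..π, sin ((k + 1 : ℕ) * t + b) * φ t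

lemma cosTail_periodic (c : ℕ → ℝ) (b : ℝ) (N : ℕ) :
    Function.Periodic (cosTail c b N) (2 * π) := by
  intro t
  refine tsum_congr fun k ↦ ?_
  rw [← cos_add_nat_mul_two_pi (_ * t - b) (k + N + 1)]
  ring_nf

section Convolution

lemma abs_integral_mul_le_integral_norm {φ : ℝ → ℝ}
    (hφ : Integrable φ (volume.restrict (Set.Ioc (-π) π))) {w : ℝ → ℝ} (hw1 : ∀ t, |w t| ≤ 1) :
    |∫ t in (-π)..π, w t * φ t| ≤ ∫ t in Set.Ioc (-π) π, ‖φ t‖ := by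
  rw [intervalIntegral.integral_of_le (by linarith [pi_pos]), ← norm_eq_abs]
  refine norm_integral_le_of_norm_le hφ.norm (.of_forall fun t ↦ ?_)
  rw [norm_mul]
  exact mul_le_of_le_one_left (norm_nonneg _) (hw1 t)

variable {c : ℕ → ℝ} (hc : Summable c) (b : ℝ)
include hc

lemma continuous_cosTail (N : ℕ) : Continuous (cosTail c b N) := by
  refine continuous_tsum (fun k ↦ by fun_prop) ((summable_nat_add_iff N).2 hc.norm) fun k t ↦ ?_
  rw [norm_mul]
  exact mul_le_of_le_one_right (norm_nonneg _) (abs_cos_le_one _)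

variable {φ : ℝ → ℝ} (hφ : Integrable φ (volume.restrict (Set.Ioc (-π) π)))
include hφ

lemma summable_mul_integral {w : ℕ → ℝ → ℝ} (hw1 : ∀ k t, |w k t| ≤ 1) :
    Summable fun k ↦ c k * ∫ t in (-π)..π, w k t * φ t := by
  refine Summable.of_norm_bounded (hc.norm.mul_right (∫ t in Set.Ioc (-π) π, ‖φ t‖)) fun k ↦ ?_
  rw [norm_mul]
  gcongr
  exact abs_integral_mul_le_integral_norm hφ (hw1 k)

lemma summable_convCoefCos : Summable (convCoefCos c b φ) :=
  summable_mul_integral hc hφ fun _ _ ↦ abs_cos_le_one _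

lemma summable_convCoefSin : Summable (convCoefSin c b φ) :=
  summable_mul_integral hc hφ fun _ _ ↦ abs_sin_le_one _

omit hc in
lemma integral_cos_sub_mul (k : ℕ) (x : ℝ) :
    ∫ t in (-π)..π, c k * cos ((k + 1 : ℕ) * (x - t) - b) * φ t
      = trigTerm (convCoefCos c b φ) (convCoefSin c b φ) k x := by
  have h_int {w : ℝ → ℝ} (hw : Continuous w) (hw1 : ∀ t, |w t| ≤ 1) (d : ℝ) :
      IntervalIntegrable (fun t ↦ d * (w t * φ t)) volume (-π) π := by
    rw [intervalIntegrable_iff_integrableOn_Ioc_of_le (by linarith [pi_pos])]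
    exact (hφ.bdd_mul hw.aestronglyMeasurable (.of_forall hw1)).const_mul d
  have angle_sum (t : ℝ) : c k * cos ((k + 1 : ℕ) * (x - t) - b) * φ t
      = (c k * cos ((k + 1 : ℕ) * x)) * (cos ((k + 1 : ℕ) * t + b) * φ t)
        + (c k * sin ((k + 1 : ℕ) * x)) * (sin ((k + 1 : ℕ) * t + b) * φ t) := by
    rw [mul_sub, sub_sub, cos_sub]
    ring
  simp_rw [angle_sum]
  rw [intervalIntegral.integral_add (h_int (by fun_prop) (fun t ↦ abs_cos_le_one _) _)
    (h_int (by fun_prop) (fun t ↦ abs_sin_le_one _) _), intervalIntegral.integral_const_mul,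
    intervalIntegral.integral_const_mul, trigTerm, convCoefCos, convCoefSin]
  ring

lemma integral_cosTail_sub_mul (N : ℕ) (x : ℝ) :
    ∫ t in (-π)..π, cosTail c b N (x - t) * φ t
      = ∑' k, trigTerm (convCoefCos c b φ) (convCoefSin c b φ) (k + N) x := by
  have hle : -π ≤ π := by linarith [pi_pos]
  have hsum := hasSum_integral_of_summable_integral_norm (μ := volume.restrict (Set.Ioc (-π) π))
    (F := fun k t ↦ c (k + N) * cos ((k + N + 1 : ℕ) * (x - t) - b) * φ t)
    (fun k ↦ by
      simp_rw [mul_assoc]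
      exact (hφ.bdd_mul (c := 1) (Continuous.aestronglyMeasurable (by fun_prop))
        (.of_forall fun _ ↦ abs_cos_le_one _)).const_mul _)
    (by
      refine Summable.of_nonneg_of_le (fun k ↦ integral_nonneg fun t ↦ norm_nonneg _) (fun k ↦ ?_)
        (((summable_nat_add_iff N).2 hc.norm).mul_right (∫ t in Set.Ioc (-π) π, ‖φ t‖))
      rw [← integral_const_mul]
      refine integral_mono_of_nonneg (.of_forall fun t ↦ norm_nonneg _) (hφ.norm.const_mul _)
        (.of_forall fun t ↦ ?_)
      simp only [norm_mul]
      exact mul_le_mul_of_nonneg_right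
        (mul_le_of_le_one_right (norm_nonneg _) (abs_cos_le_one _)) (norm_nonneg _))
  simp_rw [tsum_mul_right, ← intervalIntegral.integral_of_le hle,
    integral_cos_sub_mul b hφ (_ + N) x] at hsum
  exact hsum.tsum_eq.symm

lemma convolution_sub_fourierSum {f : ℝ → ℝ} {a : ℝ}
    (hf : ∀ x, f x = a / 2 + (1 / π) * ∫ t in (-π)..π, cosTail c b 0 (x - t) * φ t)
    (N : ℕ) (x : ℝ) :
    f x - fourierSum N f x = (1 / π) * ∫ t in (-π)..π, cosTail c b N (x - t) * φ t := by
  set u : ℕ → ℝ := fun k ↦ (1 / π) * convCoefCos c b φ k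
  set v : ℕ → ℝ := fun k ↦ (1 / π) * convCoefSin c b φ k
  have hterm (k : ℕ) (y : ℝ) :
      trigTerm u v k y = (1 / π) * trigTerm (convCoefCos c b φ) (convCoefSin c b φ) k y := by
    simp only [trigTerm, u, v]
    ring
  have hf' : f = trigSeries a u v := by
    ext y
    rw [hf, integral_cosTail_sub_mul hc b hφ, trigSeries, ← tsum_mul_left]
    simp only [hterm, add_zero]
  rw [hf', trigSeries_sub_fourierSum ((summable_convCoefCos hc b hφ).mul_left _)
    ((summable_convCoefSin hc b hφ).mul_left _), integral_cosTail_sub_mul hc b hφ, ← tsum_mul_left]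
  exact tsum_congr fun k ↦ hterm (k + N) x

end Convolution

/-! ### The generalized Poisson kernel -/

/-- The coefficient `e^{-α (k + 1)^r}` of frequency `k + 1` in the generalized Poisson kernel. -/
noncomputable def poissonCoef (α r : ℝ) (k : ℕ) : ℝ := exp (-α * ((k : ℝ) + 1) ^ r)

lemma summable_poissonCoef {α r : ℝ} (hα : 0 < α) (hr : 0 < r) : Summable (poissonCoef α r) := by
  have hdecay : (fun x : ℝ ↦ exp (-α * x ^ r)) =O[atTop] fun x : ℝ ↦ x ^ (-2 : ℝ) := by
    refine (((isLittleO_exp_neg_mul_rpow_atTop hα (-2 / r)).comp_tendsto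
      (tendsto_rpow_atTop hr)).isBigO).congr' .rfl ?_
    filter_upwards [eventually_ge_atTop 0] with x hx
    rw [Function.comp_apply, ← rpow_mul hx, mul_div_cancel₀ _ hr.ne']
  refine summable_of_isBigO_nat ?_ (hdecay.comp_tendsto
    (tendsto_natCast_atTop_atTop.atTop_add (tendsto_const_nhds (x := (1 : ℝ)))))
  exact_mod_cast (summable_nat_add_iff 1).2 (Real.summable_nat_rpow.2 (by norm_num : (-2 : ℝ) < -1))

lemma genPoissonKernel_eq_cosTail (α r β : ℝ) :
    genPoissonKernel α r β = cosTail (poissonCoef α r) (β * π / 2) 0 := by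
  ext t
  simp [genPoissonKernel, cosTail, poissonCoef]

/-! ### Complete monotonicity and the Euler transform -/

/-- `f` is completely monotone up to order `n` on `(0, ∞)`: `(-1)^k f^(k) ≥ 0` for `k ≤ n`. The
negated derivative `f'` is carried as a witness, so that no iterated derivatives occur. -/
def CompletelyMonotoneUpTo : ℕ → (ℝ → ℝ) → Prop
  | 0, f => ∀ x > 0, 0 ≤ f x
  | n + 1, f => (∀ x > 0, 0 ≤ f x) ∧
      ∃ f' : ℝ → ℝ, (∀ x > 0, HasDerivAt f (-f' x) x) ∧ CompletelyMonotoneUpTo n f'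

namespace CompletelyMonotoneUpTo

variable {n : ℕ} {f g : ℝ → ℝ}

lemma nonneg (hf : CompletelyMonotoneUpTo n f) {x : ℝ} (hx : 0 < x) : 0 ≤ f x := by
  cases n with
  | zero => exact hf x hx
  | succ n => exact hf.1 x hx

lemma of_succ (hf : CompletelyMonotoneUpTo (n + 1) f) : CompletelyMonotoneUpTo n f := by
  induction n generalizing f with
  | zero => exact hf.1
  | succ n ih =>
    obtain ⟨hf0, f', hderiv, hf'⟩ := hf
    exact ⟨hf0, f', hderiv, ih hf'⟩

lemma add (hf : CompletelyMonotoneUpTo n f) (hg : CompletelyMonotoneUpTo n g) :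
    CompletelyMonotoneUpTo n (fun x ↦ f x + g x) := by
  induction n generalizing f g with
  | zero => exact fun x hx ↦ add_nonneg (hf x hx) (hg x hx)
  | succ n ih =>
    obtain ⟨hf0, f', hfd, hf'⟩ := hf
    obtain ⟨hg0, g', hgd, hg'⟩ := hg
    refine ⟨fun x hx ↦ add_nonneg (hf0 x hx) (hg0 x hx), _, fun x hx ↦ ?_, ih hf' hg'⟩
    exact ((hfd x hx).add (hgd x hx)).congr_deriv (by ring)

lemma mul (hf : CompletelyMonotoneUpTo n f) (hg : CompletelyMonotoneUpTo n g) :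
    CompletelyMonotoneUpTo n (fun x ↦ f x * g x) := by
  induction n generalizing f g with
  | zero => exact fun x hx ↦ mul_nonneg (hf x hx) (hg x hx)
  | succ n ih =>
    have hf_n := hf.of_succ
    have hg_n := hg.of_succ
    obtain ⟨hf0, f', hfd, hf'⟩ := hf
    obtain ⟨hg0, g', hgd, hg'⟩ := hg
    refine ⟨fun x hx ↦ mul_nonneg (hf0 x hx) (hg0 x hx), _, fun x hx ↦ ?_,
      (ih hf' hg_n).add (ih hf_n hg')⟩
    exact ((hfd x hx).mul (hgd x hx)).congr_deriv (by ring)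

lemma const_mul_rpow_neg (n : ℕ) {c s : ℝ} (hc : 0 ≤ c) (hs : 0 ≤ s) :
    CompletelyMonotoneUpTo n (fun x ↦ c * x ^ (-s)) := by
  induction n generalizing c s with
  | zero => exact fun x hx ↦ mul_nonneg hc (rpow_nonneg (le_of_lt hx) _)
  | succ n ih =>
    refine ⟨fun x hx ↦ mul_nonneg hc (rpow_nonneg (le_of_lt hx) _), _, fun x hx ↦ ?_,
      ih (c := c * s) (s := s + 1) (by positivity) (by positivity)⟩
    refine ((hasDerivAt_rpow_const (p := -s) (.inl (ne_of_gt hx))).const_mul c).congr_deriv ?_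
    rw [neg_add, ← sub_eq_add_neg]
    ring

lemma exp_neg_mul_rpow {α r : ℝ} (hα : 0 ≤ α) (hr0 : 0 ≤ r) (hr1 : r ≤ 1) (n : ℕ) :
    CompletelyMonotoneUpTo n (fun x ↦ exp (-α * x ^ r)) := by
  induction n with
  | zero => exact fun x _ ↦ (exp_pos _).le
  | succ n ih =>
    refine ⟨fun x _ ↦ (exp_pos _).le, _, fun x hx ↦ ?_,
      (const_mul_rpow_neg n (mul_nonneg hα hr0) (sub_nonneg.2 hr1)).mul ih⟩
    refine ((hasDerivAt_rpow_const (p := r) (.inl (ne_of_gt hx))).const_mul (-α)).exp.congr_deriv ?_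
    rw [neg_sub]
    ring

lemma antitoneOn (hf : CompletelyMonotoneUpTo (n + 1) f) : AntitoneOn f (Set.Ioi 0) := by
  obtain ⟨-, f', hfd, hf'⟩ := hf
  refine antitoneOn_of_deriv_nonpos (convex_Ioi 0)
    (fun y hy ↦ (hfd y hy).continuousAt.continuousWithinAt) ?_ ?_ <;>
    rw [interior_Ioi] <;> intro y hy
  · exact (hfd y hy).differentiableAt.differentiableWithinAt
  · rw [(hfd y hy).deriv, neg_nonpos]
    exact hf'.nonneg hy

lemma sub_comp_add_one_nonneg (hf : CompletelyMonotoneUpTo (n + 1) f) {x : ℝ} (hx : 0 < x) :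
    0 ≤ f x - f (x + 1) :=
  sub_nonneg.2 (hf.antitoneOn hx (hx.trans (lt_add_one x)) (lt_add_one x).le)

lemma sub_comp_add_one (hf : CompletelyMonotoneUpTo (n + 1) f) :
    CompletelyMonotoneUpTo n (fun x ↦ f x - f (x + 1)) := by
  induction n generalizing f with
  | zero => exact fun x hx ↦ hf.sub_comp_add_one_nonneg hx
  | succ n ih =>
    refine ⟨fun x hx ↦ hf.sub_comp_add_one_nonneg hx, ?_⟩
    obtain ⟨-, f', hfd, hf'⟩ := hf
    refine ⟨_, fun x hx ↦ ?_, ih hf'⟩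
    exact ((hfd x hx).sub ((hfd (x + 1) (by linarith [show 0 < x from hx])).comp_add_const x
      1)).congr_deriv (by ring)

end CompletelyMonotoneUpTo

/-- The `N`-th Euler sum `((1 + z T)^N f)(x) = ∑_j (N choose j) z^j f(x + j)`, where `T` is the unit
shift. -/
noncomputable def eulerSum (f : ℝ → ℝ) (z : ℂ) : ℕ → ℝ → ℂ
  | 0, x => f x
  | N + 1, x => eulerSum f z N x + z * eulerSum f z N (x + 1)

lemma eulerSum_sub_comp_add_one (f : ℝ → ℝ) (z : ℂ) (N : ℕ) (x : ℝ) :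
    eulerSum (fun y ↦ f y - f (y + 1)) z N x = eulerSum f z N x - eulerSum f z N (x + 1) := by
  induction N generalizing x with
  | zero => simp [eulerSum]
  | succ N ih =>
    simp only [eulerSum, ih]
    ring

lemma norm_eulerSum_le {f : ℝ → ℝ} {z : ℂ} {ρ : ℝ} (hρ : 1 ≤ ρ) (hz : ‖1 + z‖ ≤ ρ) (N : ℕ)
    (hf : CompletelyMonotoneUpTo N f) {x : ℝ} (hx : 0 < x) :
    ‖eulerSum f z N x‖ ≤ ρ ^ N * f x := by
  induction N generalizing f x with
  | zero => simp [eulerSum, abs_of_nonneg (hf x hx)]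
  | succ N ih =>
    have hx1 : 0 < x + 1 := by linarith
    -- `1 + z T = (1 - T) + (1 + z) T`, and `1 - T` preserves complete monotonicity.
    have hsplit : eulerSum f z (N + 1) x
        = eulerSum (fun y ↦ f y - f (y + 1)) z N x + (1 + z) * eulerSum f z N (x + 1) := by
      rw [eulerSum_sub_comp_add_one, eulerSum]
      ring
    have hdiff := ih hf.sub_comp_add_one hx
    have hshift := ih hf.of_succ hx1
    have hdiff0 : 0 ≤ ρ ^ N * (f x - f (x + 1)) :=
      mul_nonneg (by positivity) (hf.sub_comp_add_one_nonneg hx)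
    calc ‖eulerSum f z (N + 1) x‖
        ≤ ‖eulerSum (fun y ↦ f y - f (y + 1)) z N x‖ + ‖1 + z‖ * ‖eulerSum f z N (x + 1)‖ := by
          rw [hsplit, ← norm_mul]
          exact norm_add_le _ _
      _ ≤ ρ * (ρ ^ N * (f x - f (x + 1))) + ρ * (ρ ^ N * f (x + 1)) := by
          gcongr
          exact hdiff.trans (le_mul_of_one_le_left hdiff0 hρ)
      _ = ρ ^ (N + 1) * f x := by ring

lemma eulerSum_eq_sum_choose (f : ℝ → ℝ) (z : ℂ) (N : ℕ) (x : ℝ) :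
    eulerSum f z N x = ∑ j ∈ Finset.range (N + 1), (N.choose j : ℂ) * z ^ j * f (x + j) := by
  induction N generalizing x with
  | zero => simp [eulerSum]
  | succ N ih =>
    have hfirst : ∑ j ∈ Finset.range (N + 1), (N.choose j : ℂ) * z ^ j * f (x + j)
        = ∑ j ∈ Finset.range (N + 1), (N.choose (j + 1) : ℂ) * z ^ (j + 1) * f (x + (j + 1 : ℕ))
          + f x := by
      have := Finset.sum_range_succ' (fun j ↦ (N.choose j : ℂ) * z ^ j * f (x + j)) (N + 1)
      rw [Finset.sum_range_succ] at this
      simpa using this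
    rw [eulerSum, ih, ih, hfirst, Finset.sum_range_succ' _ (N + 1), Finset.mul_sum, add_right_comm,
      ← Finset.sum_add_distrib]
    congr 1
    · refine Finset.sum_congr rfl fun j _ ↦ ?_
      rw [Nat.choose_succ_succ, add_right_comm x 1 (j : ℝ), add_assoc x (j : ℝ) 1]
      push_cast
      ring
    · simp

/-- The Euler transform of the power series `∑ f(1 + j) z^j`, which continues it analytically to the
disc `‖1 + z‖ < 2` when `f` is completely monotone. -/
noncomputable def eulerTransform (f : ℝ → ℝ) (z : ℂ) : ℂ :=
  ∑' N : ℕ, (1 / 2 : ℂ) ^ (N + 1) * eulerSum f z N 1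

lemma differentiable_eulerSum (f : ℝ → ℝ) (N : ℕ) (x : ℝ) :
    Differentiable ℂ (eulerSum f · N x) := by
  simp_rw [eulerSum_eq_sum_choose]
  fun_prop

lemma analyticAt_eulerTransform {f : ℝ → ℝ} (hf : ∀ N, CompletelyMonotoneUpTo N f) {z₀ : ℂ}
    (hz : ‖1 + z₀‖ < 2) : AnalyticAt ℂ (eulerTransform f) z₀ := by
  obtain ⟨R, hR, hR2⟩ := exists_between (max_lt one_lt_two hz)
  have h1R : 1 ≤ R := (le_max_left _ _).trans hR.le
  have hopen : IsOpen {z : ℂ | ‖1 + z‖ < R} := isOpen_lt (by fun_prop) continuous_const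
  suffices DifferentiableOn ℂ (eulerTransform f) {z : ℂ | ‖1 + z‖ < R} from
    this.analyticAt (hopen.mem_nhds ((le_max_right _ _).trans_lt hR))
  refine Complex.differentiableOn_tsum_of_summable_norm
    (u := fun N ↦ 1 / 2 * f 1 * (R / 2) ^ N) ?_
    (fun N ↦ ((differentiable_eulerSum f N 1).const_mul _).differentiableOn) hopen fun N z hz ↦ ?_
  · exact (summable_geometric_of_lt_one (by positivity) (by linarith)).mul_left _
  · have hnorm : ‖(1 / 2 : ℂ)‖ = 1 / 2 := by norm_num
    rw [norm_mul, norm_pow, hnorm]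
    calc (1 / 2 : ℝ) ^ (N + 1) * ‖eulerSum f z N 1‖
        ≤ (1 / 2) ^ (N + 1) * (R ^ N * f 1) := by
          gcongr
          exact norm_eulerSum_le h1R (le_of_lt hz) N (hf N) one_pos
      _ = 1 / 2 * f 1 * (R / 2) ^ N := by
          rw [div_pow, div_pow, pow_succ]
          field

lemma hasSum_half_pow_mul_choose (j : ℕ) :
    HasSum (fun N : ℕ ↦ (1 / 2 : ℝ) ^ (N + 1) * (N.choose j : ℝ)) 1 := by
  have hgeom := (hasSum_choose_mul_geometric_of_norm_lt_one (𝕜 := ℝ) j (r := 1 / 2)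
    (by norm_num)).mul_left ((1 / 2 : ℝ) ^ (j + 1))
  rw [show (1 / 2 : ℝ) ^ (j + 1) * (1 / (1 - 1 / 2) ^ (j + 1)) = 1 by norm_num] at hgeom
  have hinit : ∑ i ∈ Finset.range j, (1 / 2 : ℝ) ^ (i + 1) * (i.choose j : ℝ) = 0 :=
    Finset.sum_eq_zero fun i hi ↦ by
      rw [Nat.choose_eq_zero_of_lt (Finset.mem_range.1 hi), Nat.cast_zero, mul_zero]
  rw [← hasSum_nat_add_iff' j, hinit, sub_zero]
  refine hgeom.congr_fun fun N ↦ ?_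
  ring

lemma summable_eulerTransform_double {f : ℝ → ℝ} (hs : Summable fun j : ℕ ↦ f (1 + j)) {z : ℂ}
    (hz : ‖z‖ ≤ 1) :
    Summable (Function.uncurry fun N j : ℕ ↦
      (((1 / 2 : ℝ) ^ (N + 1) * (N.choose j : ℝ) : ℝ) : ℂ) * (z ^ j * f (1 + j))) := by
  have hnorm (j N : ℕ) :
      ‖(((1 / 2 : ℝ) ^ (N + 1) * (N.choose j : ℝ) : ℝ) : ℂ) * (z ^ j * f (1 + j))‖
        = (1 / 2 : ℝ) ^ (N + 1) * (N.choose j : ℝ) * ‖z ^ j * f (1 + j)‖ := by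
    rw [norm_mul, Complex.norm_real, norm_of_nonneg (by positivity)]
  refine Summable.of_norm ?_
  rw [← (Equiv.prodComm ℕ ℕ).summable_iff]
  refine (summable_prod_of_nonneg fun _ ↦ norm_nonneg _).2 ?_
  simp only [Equiv.prodComm_apply, Prod.swap_prod_mk, Function.uncurry_apply_pair, hnorm,
    tsum_mul_right, (hasSum_half_pow_mul_choose _).tsum_eq, one_mul]
  refine ⟨fun j ↦ (hasSum_half_pow_mul_choose j).summable.mul_right _,
    Summable.of_nonneg_of_le (fun j ↦ norm_nonneg _) (fun j ↦ ?_) hs.norm⟩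
  rw [norm_mul, norm_pow, Complex.norm_real]
  exact mul_le_of_le_one_left (norm_nonneg _) (pow_le_one₀ (norm_nonneg _) hz)

lemma eulerTransform_eq_tsum {f : ℝ → ℝ} (hs : Summable fun j : ℕ ↦ f (1 + j)) {z : ℂ}
    (hz : ‖z‖ ≤ 1) : eulerTransform f z = ∑' j : ℕ, z ^ j * f (1 + j) := by
  have hexpand (N : ℕ) : (1 / 2 : ℂ) ^ (N + 1) * eulerSum f z N 1
      = ∑' j : ℕ, (((1 / 2 : ℝ) ^ (N + 1) * (N.choose j : ℝ) : ℝ) : ℂ) * (z ^ j * f (1 + j)) := by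
    rw [eulerSum_eq_sum_choose, tsum_eq_sum (s := Finset.range (N + 1)), Finset.mul_sum]
    · refine Finset.sum_congr rfl fun j _ ↦ ?_
      push_cast
      ring
    · intro j hj
      rw [Nat.choose_eq_zero_of_lt (by simpa using hj)]
      simp
  simp_rw [eulerTransform, hexpand]
  rw [← (summable_eulerTransform_double hs hz).tsum_comm]
  refine tsum_congr fun j ↦ ?_
  rw [tsum_mul_right, (Complex.hasSum_ofReal.2 (hasSum_half_pow_mul_choose j)).tsum_eq,
    Complex.ofReal_one, one_mul]

/-! ### The zero set of the kernel is null -/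

lemma norm_one_add_exp_mul_I_lt_two {t : ℝ} (ht : t ∈ Set.Ioo 0 (2 * π)) :
    ‖1 + Complex.exp (t * Complex.I)‖ < 2 := by
  have hcos : cos t < 1 := by
    refine (cos_le_one t).lt_of_ne fun h ↦ ht.1.ne' ?_
    exact (cos_eq_one_iff_of_lt_of_lt (by linarith [ht.1, pi_pos]) ht.2).1 h
  have hsq : ‖1 + Complex.exp (t * Complex.I)‖ ^ 2 = 2 + 2 * cos t := by
    rw [← Complex.normSq_eq_norm_sq, Complex.normSq_add, Complex.normSq_eq_norm_sq,
      Complex.normSq_eq_norm_sq, Complex.norm_exp_ofReal_mul_I, one_mul, Complex.conj_re,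
      Complex.exp_ofReal_mul_I_re, norm_one]
    ring
  nlinarith [norm_nonneg (1 + Complex.exp (t * Complex.I))]

lemma cosTail_zero_eq_re_eulerTransform {f : ℝ → ℝ} (hs : Summable fun j : ℕ ↦ f (1 + j))
    (b t : ℝ) :
    cosTail (fun k ↦ f (1 + k)) b 0 t = (Complex.exp ((t - b : ℝ) * Complex.I)
      * eulerTransform f (Complex.exp (t * Complex.I))).re := by
  have hterm (k : ℕ) : Complex.exp ((t - b : ℝ) * Complex.I)
      * (Complex.exp (t * Complex.I) ^ k * f (1 + k))
      = f (1 + k) * Complex.exp (((k + 1 : ℕ) * t - b : ℝ) * Complex.I) := by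
    rw [← Complex.exp_nat_mul, ← mul_assoc, ← Complex.exp_add, mul_comm]
    push_cast
    ring_nf
  rw [eulerTransform_eq_tsum hs (Complex.norm_exp_ofReal_mul_I t).le, ← tsum_mul_left]
  simp_rw [hterm]
  rw [Complex.re_tsum]
  · simp only [Complex.re_ofReal_mul, Complex.exp_ofReal_mul_I_re, cosTail, add_zero]
  · refine Summable.of_norm (hs.norm.congr fun k ↦ ?_)
    rw [norm_mul, Complex.norm_real, Complex.norm_exp_ofReal_mul_I, mul_one]

lemma analyticOnNhd_cosTail_zero {f : ℝ → ℝ} (hf : ∀ N, CompletelyMonotoneUpTo N f)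
    (hs : Summable fun j : ℕ ↦ f (1 + j)) (b : ℝ) :
    AnalyticOnNhd ℝ (cosTail (fun k ↦ f (1 + k)) b 0) (Set.Ioo 0 (2 * π)) := by
  intro t ht
  have hG := analyticAt_eulerTransform hf (norm_one_add_exp_mul_I_lt_two ht)
  have hA : AnalyticAt ℂ (fun w : ℂ ↦ Complex.exp ((w - b) * Complex.I)
      * eulerTransform f (Complex.exp (w * Complex.I))) (t : ℂ) :=
    AnalyticAt.mul (by fun_prop)
      (hG.comp (f := fun w : ℂ ↦ Complex.exp (w * Complex.I)) (by fun_prop))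
  refine hA.re_ofReal.congr (.of_forall fun s ↦ ?_)
  simp [cosTail_zero_eq_re_eulerTransform hs]

lemma cosTail_zero_eq_trigSeries (c : ℕ → ℝ) (b : ℝ) :
    cosTail c b 0 = trigSeries 0 (fun k ↦ c k * cos b) (fun k ↦ c k * sin b) := by
  ext t
  rw [trigSeries, zero_div, zero_add]
  refine tsum_congr fun k ↦ ?_
  rw [cos_sub, trigTerm, add_zero]
  ring

lemma exists_cosTail_zero_ne_zero {c : ℕ → ℝ} (hc : Summable c) (hc0 : c 0 ≠ 0) (b : ℝ) :
    ∃ t ∈ Set.Ioo 0 (2 * π), cosTail c b 0 t ≠ 0 := by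
  by_contra! hzero
  have hzero_Icc : Set.EqOn (cosTail c b 0) 0 (Set.Icc 0 (2 * π)) := by
    rw [← closure_Ioo two_pi_pos.ne]
    exact Set.EqOn.closure hzero (continuous_cosTail hc b 0) continuous_const
  have hzero_all : cosTail c b 0 = 0 := by
    ext t
    obtain ⟨s, hs, hts⟩ := (cosTail_periodic c b 0).exists_mem_Ico₀ two_pi_pos t
    rw [hts, hzero_Icc ⟨hs.1, hs.2.le⟩, Pi.zero_apply, Pi.zero_apply]
  have hA := fourierCoefA_trigSeries_succ (hc.mul_right (cos b)) (hc.mul_right (sin b)) 0 0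
  have hB := fourierCoefB_trigSeries_succ (hc.mul_right (cos b)) (hc.mul_right (sin b)) 0 0
  rw [← cosTail_zero_eq_trigSeries, hzero_all] at hA hB
  have hcos : cos b = 0 := by simpa [fourierCoefA, hc0, eq_comm] using hA
  have hsin : sin b = 0 := by simpa [fourierCoefB, hc0, eq_comm] using hB
  simpa [hcos, hsin] using sin_sq_add_cos_sq b

lemma ae_ne_zero_of_periodic_of_analyticOnNhd {g : ℝ → ℝ} {T : ℝ} (hg : Function.Periodic g T)
    (hT : 0 < T) (hA : AnalyticOnNhd ℝ g (Set.Ioo 0 T)) (hne : ∃ t ∈ Set.Ioo 0 T, g t ≠ 0) :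
    ∀ᵐ t, g t ≠ 0 := by
  obtain ⟨t₁, ht₁, hgt₁⟩ := hne
  have hIoo : ∀ᵐ t ∂volume.restrict (Set.Ioo 0 T), g t ≠ 0 :=
    ae_restrict_le_codiscreteWithin measurableSet_Ioo
      (hA.preimage_zero_mem_codiscreteWithin hgt₁ ht₁ (isConnected_Ioo hT))
  have hIoc : volume ({t | g t = 0} ∩ Set.Ioc 0 (0 + T)) = 0 := by
    rw [zero_add, ← Measure.restrict_apply' measurableSet_Ioc, ← restrict_Ioo_eq_restrict_Ioc]
    simpa only [ae_iff, not_not] using hIoo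
  simp_rw [ae_iff, not_not]
  refine (isAddFundamentalDomain_Ioc hT 0).measure_zero_of_invariant _ (fun m ↦ ?_) hIoc
  ext t
  have := hg.map_vadd_zmultiples (-m) t
  simp_all [Set.mem_vadd_set_iff_neg_vadd_mem]

lemma ae_genPoissonKernel_ne_zero {α r : ℝ} (hα : 0 < α) (hr0 : 0 < r) (hr1 : r ≤ 1) (β : ℝ) :
    ∀ᵐ t, genPoissonKernel α r β t ≠ 0 := by
  have hcoef : poissonCoef α r = fun k : ℕ ↦ exp (-α * (1 + (k : ℝ)) ^ r) := by
    ext k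
    rw [poissonCoef, add_comm]
  have hsum := summable_poissonCoef hα hr0
  rw [genPoissonKernel_eq_cosTail]
  refine ae_ne_zero_of_periodic_of_analyticOnNhd (cosTail_periodic _ _ _) two_pi_pos ?_
    (exists_cosTail_zero_ne_zero hsum (exp_ne_zero _) _)
  rw [hcoef] at hsum ⊢
  exact analyticOnNhd_cosTail_zero (f := fun x ↦ exp (-α * x ^ r))
    (CompletelyMonotoneUpTo.exp_neg_mul_rpow hα.le hr0.le hr1) hsum _

/-! ### Duality on a period -/

/-- Lebesgue measure on the period `(-π, π]`. -/
noncomputable abbrev periodMeasure : Measure ℝ := volume.restrict (Set.Ioc (-π) π)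

lemma periodMeasure_real_univ : periodMeasure.real Set.univ = 2 * π := by
  rw [measureReal_restrict_apply_univ, Real.volume_real_Ioc_of_le (by linarith [pi_pos])]
  ring

lemma periodMeasure_ne_zero : periodMeasure ≠ 0 := by
  intro h
  have huniv := periodMeasure_real_univ
  rw [h, measureReal_zero_apply] at huniv
  exact two_pi_pos.ne huniv

lemma abs_integral_mul_le_lpNorm_mul_lpNorm {X : Type*} {mX : MeasurableSpace X} {μ : Measure X}
    {f g : X → ℝ} {s p : ℝ≥0∞} [ENNReal.HolderConjugate s p] (hf : MemLp f s μ)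
    (hg : MemLp g p μ) : |∫ t, f t * g t ∂μ| ≤ lpNorm f s μ * lpNorm g p μ := by
  have hfg : AEStronglyMeasurable (fun t ↦ f t * g t) μ := hf.1.mul hg.1
  calc |∫ t, f t * g t ∂μ|
    _ ≤ ∫ t, ‖f t * g t‖ ∂μ := by
      rw [← norm_eq_abs]
      exact norm_integral_le_integral_norm _
    _ = (eLpNorm (fun t ↦ f t * g t) 1 μ).toReal := by
      rw [toReal_eLpNorm hfg, lpNorm_one_eq_integral_norm hfg]
    _ ≤ (eLpNorm f s μ * eLpNorm g p μ).toReal :=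
      ENNReal.toReal_mono (ENNReal.mul_ne_top hf.eLpNorm_ne_top hg.eLpNorm_ne_top)
        (eLpNorm_smul_le_mul_eLpNorm (𝕜 := ℝ) (p := s) (q := p) (r := 1) hg.1 hf.1)
    _ = lpNorm f s μ * lpNorm g p μ := by
      rw [ENNReal.toReal_mul, toReal_eLpNorm hf.1, toReal_eLpNorm hg.1]

lemma memLp_periodMeasure_of_continuous {E : Type*} [NormedAddCommGroup E] {f : ℝ → E}
    (hf : Continuous f) (s : ℝ≥0∞) : MemLp f s periodMeasure := by
  obtain ⟨M, hM⟩ := (isCompact_Icc (a := -π) (b := π)).exists_bound_of_continuousOn hf.continuousOn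
  exact MemLp.of_bound hf.aestronglyMeasurable M ((ae_restrict_iff' measurableSet_Ioc).2
    (.of_forall fun t ht ↦ hM t (Set.Ioc_subset_Icc_self ht)))

section Periodic

variable {ψ : ℝ → ℝ}

lemma eLpNorm_restrict_Ioc_of_periodic {T : ℝ} (hT : 0 < T) (hψ : Function.Periodic ψ T)
    (p : ℝ≥0∞) (a b : ℝ) :
    eLpNorm ψ p (volume.restrict (Set.Ioc a (a + T)))
      = eLpNorm ψ p (volume.restrict (Set.Ioc b (b + T))) := by
  rcases eq_or_ne p 0 with rfl | hp0
  · simp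
  rcases eq_or_ne p ∞ with rfl | hptop
  · have hess (c : ℝ) : essSup (fun x ↦ ‖ψ x‖ₑ) (volume.restrict (Set.Ioc c (c + T)))
        = essSup (fun x ↦ ‖ψ x‖ₑ) volume :=
      (isAddFundamentalDomain_Ioc hT c volume).essSup_measure_restrict
        fun g x ↦ by rw [hψ.map_vadd_zmultiples]
    simp only [eLpNorm_exponent_top, eLpNormEssSup, hess]
  · simp only [eLpNorm_eq_lintegral_rpow_enorm_toReal hp0 hptop]
    congr 1
    exact (isAddFundamentalDomain_Ioc hT a).setLIntegral_eq (isAddFundamentalDomain_Ioc hT b)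
      (fun x ↦ ‖ψ x‖ₑ ^ p.toReal) fun g x ↦ by rw [hψ.map_vadd_zmultiples]

lemma eLpNorm_periodMeasure_of_periodic (hψ : Function.Periodic ψ (2 * π)) (p : ℝ≥0∞) (a : ℝ) :
    eLpNorm ψ p (volume.restrict (Set.Ioc a (a + 2 * π))) = eLpNorm ψ p periodMeasure := by
  rw [eLpNorm_restrict_Ioc_of_periodic two_pi_pos hψ p a (-π), show -π + 2 * π = π by ring]

lemma eLpNorm_comp_sub_left_of_periodic (hψm : Measurable ψ) (hψ : Function.Periodic ψ (2 * π))
    (p : ℝ≥0∞) (x : ℝ) :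
    eLpNorm (fun t ↦ ψ (x - t)) p periodMeasure = eLpNorm ψ p periodMeasure := by
  have hmp : MeasurePreserving (fun t : ℝ ↦ x - t) periodMeasure
      (volume.restrict (Set.Ioc (x - π) (x - π + 2 * π))) := by
    rw [← Measure.restrict_congr_set Ico_ae_eq_Ioc]
    convert! (Measure.measurePreserving_sub_left (volume : Measure ℝ) x).restrict_preimage
      (s := Set.Ico (x - π) (x - π + 2 * π)) measurableSet_Ico using 2
    rw [Set.preimage_const_sub_Ico]
    ring_nf
  rw [← eLpNorm_periodMeasure_of_periodic hψ p (x - π)]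
  exact eLpNorm_comp_measurePreserving hψm.aestronglyMeasurable hmp

end Periodic

lemma measurable_toIocMod {T : ℝ} (hT : 0 < T) (a : ℝ) : Measurable (toIocMod hT a) := by
  simp only [funext (toIocMod_eq_sub_fract_mul hT a)]
  fun_prop

/-- The `2π`-periodic extension of the restriction to `(-π, π]` of the reflection of `φ`. -/
noncomputable def periodicReflection (φ : ℝ → ℝ) (t : ℝ) : ℝ :=
  φ (toIocMod two_pi_pos (-π) (-t))

section PeriodicReflection

variable {φ : ℝ → ℝ}

lemma periodicReflection_periodic : Function.Periodic (periodicReflection φ) (2 * π) := fun t ↦ by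
  rw [periodicReflection, periodicReflection, neg_add', (toIocMod_periodic two_pi_pos _).sub_eq]

lemma integral_mul_periodicReflection (g : ℝ → ℝ) :
    ∫ t in (-π)..π, g (-t) * periodicReflection φ t = ∫ t, g t * φ t ∂periodMeasure := by
  have hcomp := intervalIntegral.integral_comp_neg
    (f := fun t ↦ g t * φ (toIocMod two_pi_pos (-π) t)) (a := -π) (b := π)
  simp only [periodicReflection]
  rw [hcomp, neg_neg, intervalIntegral.integral_of_le (by linarith [pi_pos])]
  refine setIntegral_congr_fun measurableSet_Ioc fun t ht ↦ ?_
  have hmod : toIocMod two_pi_pos (-π) t = t :=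
    (toIocMod_eq_self two_pi_pos).2 ⟨ht.1, by linarith [ht.2]⟩
  simp only [hmod]

lemma measurable_periodicReflection (hφ : Measurable φ) : Measurable (periodicReflection φ) :=
  hφ.comp ((measurable_toIocMod _ _).comp measurable_neg)

lemma eLpNorm_periodicReflection (hφ : Measurable φ) (p : ℝ≥0∞) :
    eLpNorm (periodicReflection φ) p periodMeasure = eLpNorm φ p periodMeasure := by
  have hper : Function.Periodic (fun t ↦ φ (toIocMod two_pi_pos (-π) t)) (2 * π) :=
    (toIocMod_periodic two_pi_pos _).comp φ
  have hrefl := eLpNorm_comp_sub_left_of_periodic (hφ.comp (measurable_toIocMod _ _)) hper p 0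
  simp only [zero_sub] at hrefl
  refine hrefl.trans (eLpNorm_congr_ae ?_)
  refine (ae_restrict_iff' measurableSet_Ioc).2 (.of_forall fun t ht ↦ ?_)
  exact congrArg φ ((toIocMod_eq_self two_pi_pos).2 ⟨ht.1, by linarith [ht.2]⟩)

end PeriodicReflection

/-- The tail `∑_{k > N} e^{-α k^r} cos (k t - βπ/2)` of the generalized Poisson kernel. -/
noncomputable def poissonTail (α r β : ℝ) (N : ℕ) : ℝ → ℝ :=
  cosTail (poissonCoef α r) (β * π / 2) N

section Class

variable {α r : ℝ} (hα : 0 < α) (hr : 0 < r) (β : ℝ) {s p : ℝ≥0∞}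

include hα hr in
lemma continuous_poissonTail (N : ℕ) : Continuous (poissonTail α r β N) :=
  continuous_cosTail (summable_poissonCoef hα hr) _ N

include hα hr in
lemma continuous_genPoissonKernel : Continuous (genPoissonKernel α r β) := by
  rw [genPoissonKernel_eq_cosTail]
  exact continuous_poissonTail hα hr β 0

include hα hr in
lemma poissonIntegral_sub_fourierSum {a : ℝ} {f φ : ℝ → ℝ} (hφ : Integrable φ periodMeasure)
    (hf : ∀ x, f x = a / 2 + (1 / π) * ∫ t in (-π)..π, genPoissonKernel α r β (x - t) * φ t)
    (N : ℕ) (x : ℝ) :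
    f x - fourierSum N f x = (1 / π) * ∫ t in (-π)..π, poissonTail α r β N (x - t) * φ t := by
  simp only [genPoissonKernel_eq_cosTail] at hf
  exact convolution_sub_fourierSum (summable_poissonCoef hα hr) _ hφ hf N x

include hα hr in
lemma abs_integral_poissonTail_mul_le [ENNReal.HolderConjugate s p] {φ : ℝ → ℝ}
    (hφ : AEStronglyMeasurable φ periodMeasure) (hφ1 : eLpNorm φ p periodMeasure ≤ 1)
    (N : ℕ) (x : ℝ) :
    |∫ t in (-π)..π, poissonTail α r β N (x - t) * φ t|
      ≤ lpNorm (poissonTail α r β N) s periodMeasure := by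
  have hcont := continuous_poissonTail hα hr β N
  have htail : MemLp (fun t ↦ poissonTail α r β N (x - t)) s periodMeasure :=
    memLp_periodMeasure_of_continuous (hcont.comp (continuous_sub_left x)) s
  have hnorm : lpNorm (fun t ↦ poissonTail α r β N (x - t)) s periodMeasure
      = lpNorm (poissonTail α r β N) s periodMeasure := by
    rw [← toReal_eLpNorm htail.1, ← toReal_eLpNorm hcont.aestronglyMeasurable,
      eLpNorm_comp_sub_left_of_periodic hcont.measurable (cosTail_periodic _ _ _)]
  have hφ1' : lpNorm φ p periodMeasure ≤ 1 := by
    rw [← toReal_eLpNorm hφ]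
    exact ENNReal.toReal_mono ENNReal.one_ne_top hφ1
  rw [intervalIntegral.integral_of_le (by linarith [pi_pos])]
  refine (abs_integral_mul_le_lpNorm_mul_lpNorm htail
    ⟨hφ, hφ1.trans_lt ENNReal.one_lt_top⟩).trans ?_
  rw [hnorm]
  exact mul_le_of_le_one_right lpNorm_nonneg hφ1'

include hα hr in
-- The Bochner integral of a non-integrable function is `0`; since the kernel vanishes almost
-- nowhere, the product with a non-measurable function is never integrable.
lemma integral_genPoissonKernel_mul_of_not_aestronglyMeasurable (hr1 : r ≤ 1) {φ : ℝ → ℝ}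
    (hφ : ¬ AEStronglyMeasurable φ periodMeasure) (x : ℝ) :
    ∫ t in (-π)..π, genPoissonKernel α r β (x - t) * φ t = 0 := by
  rw [intervalIntegral.integral_of_le (by linarith [pi_pos])]
  refine integral_undef fun h_int ↦ hφ ?_
  have hne : ∀ᵐ t ∂periodMeasure, genPoissonKernel α r β (x - t) ≠ 0 :=
    ae_restrict_of_ae <| (Measure.measurePreserving_sub_left volume x).quasiMeasurePreserving.ae
      (ae_genPoissonKernel_ne_zero hα hr hr1 β)
  have hinv : AEStronglyMeasurable (fun t ↦ (genPoissonKernel α r β (x - t))⁻¹) periodMeasure :=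
    ((continuous_genPoissonKernel hα hr β).comp
      (continuous_sub_left x)).measurable.inv.aestronglyMeasurable
  refine (hinv.mul h_int.1).congr ?_
  filter_upwards [hne] with t ht
  exact inv_mul_cancel_left₀ ht (φ t)

include hα hr in
lemma abs_sub_fourierSum_le_of_mem_poissonClass (hr1 : r ≤ 1) [hsp : ENNReal.HolderConjugate s p]
    {f : ℝ → ℝ} (hf : f ∈ poissonClass α r β p) (N : ℕ) (x : ℝ) :
    |f x - fourierSum N f x| ≤ 1 / π * lpNorm (poissonTail α r β N) s periodMeasure := by
  obtain ⟨-, a, φ, hφper, hφ1, -, hf⟩ := hf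
  have hφ1' : eLpNorm φ p periodMeasure ≤ 1 := by
    rwa [← eLpNorm_periodMeasure_of_periodic hφper p 0, zero_add]
  by_cases hφ : AEStronglyMeasurable φ periodMeasure
  · have hφint : Integrable φ periodMeasure :=
      MemLp.integrable (hsp.symm.one_le) ⟨hφ, hφ1'.trans_lt ENNReal.one_lt_top⟩
    rw [poissonIntegral_sub_fourierSum hα hr β hφint hf, abs_mul, abs_of_pos (by positivity)]
    gcongr
    exact abs_integral_poissonTail_mul_le hα hr β hφ hφ1' N x
  · have hf0 (y : ℝ) : f y = a / 2 + (1 / π) * ∫ t in (-π)..π,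
        genPoissonKernel α r β (y - t) * (fun _ ↦ (0 : ℝ)) t := by
      rw [hf, integral_genPoissonKernel_mul_of_not_aestronglyMeasurable hα hr β hr1 hφ]
      simp
    rw [poissonIntegral_sub_fourierSum hα hr β (integrable_zero _ _ _) hf0]
    simpa using mul_nonneg (by positivity) lpNorm_nonneg

include hα hr in
lemma EnC_le (hr1 : r ≤ 1) [ENNReal.HolderConjugate s p] (n : ℕ) :
    EnC α r β p n ≤ 1 / π * lpNorm (poissonTail α r β (n - 1)) s periodMeasure := by
  have hnonneg : 0 ≤ 1 / π * lpNorm (poissonTail α r β (n - 1)) s periodMeasure :=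
    mul_nonneg (by positivity) lpNorm_nonneg
  exact Real.iSup_le (fun f ↦ Real.iSup_le (fun hf ↦ Real.iSup_le
    (abs_sub_fourierSum_le_of_mem_poissonClass hα hr β hr1 hf _) hnonneg) hnonneg) hnonneg

include hα hr in
lemma abs_sub_fourierSum_le_EnC (hr1 : r ≤ 1) (hp : 1 ≤ p) {f : ℝ → ℝ}
    (hf : f ∈ poissonClass α r β p) (n : ℕ) (x : ℝ) :
    |f x - fourierSum (n - 1) f x| ≤ EnC α r β p n := by
  have := Fact.mk hp
  have hbound {g : ℝ → ℝ} (hg : g ∈ poissonClass α r β p) (y : ℝ) :=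
    abs_sub_fourierSum_le_of_mem_poissonClass (s := p.conjExponent) hα hr β hr1 hg (n - 1) y
  have hnonneg := (abs_nonneg _).trans (hbound hf x)
  have hbdd : BddAbove (Set.range fun y ↦ |f y - fourierSum (n - 1) f y|) :=
    ⟨_, by rintro _ ⟨y, rfl⟩; exact hbound hf y⟩
  have hbdd' : BddAbove (Set.range fun g ↦ ⨆ (_ : g ∈ poissonClass α r β p),
      ⨆ y : ℝ, |g y - fourierSum (n - 1) g y|) := by
    refine ⟨1 / π * lpNorm (poissonTail α r β (n - 1)) p.conjExponent periodMeasure, ?_⟩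
    rintro _ ⟨g, rfl⟩
    exact Real.iSup_le (fun hg ↦ Real.iSup_le (hbound hg) hnonneg) hnonneg
  calc |f x - fourierSum (n - 1) f x|
    _ ≤ ⨆ (_ : f ∈ poissonClass α r β p), ⨆ y : ℝ, |f y - fourierSum (n - 1) f y| := by
      rw [ciSup_pos hf]
      exact le_ciSup hbdd x
    _ ≤ EnC α r β p n := le_ciSup hbdd' f

include hα hr in
lemma le_EnC (hr1 : r ≤ 1) (hp : 1 ≤ p) {φ : ℝ → ℝ} (hφ : Measurable φ)
    (hφ1 : eLpNorm φ p periodMeasure ≤ 1) (hφ0 : ∫ t, φ t ∂periodMeasure = 0) (n : ℕ) :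
    1 / π * ∫ t, poissonTail α r β (n - 1) t * φ t ∂periodMeasure ≤ EnC α r β p n := by
  set ψ := periodicReflection φ
  set f : ℝ → ℝ := fun x ↦
    (0 : ℝ) / 2 + (1 / π) * ∫ t in (-π)..π, genPoissonKernel α r β (x - t) * ψ t
  have hψper : Function.Periodic ψ (2 * π) := periodicReflection_periodic
  have hψ1 : eLpNorm ψ p periodMeasure ≤ 1 := by rwa [eLpNorm_periodicReflection hφ]
  have hψ0 : ∫ t in (-π)..π, ψ t = 0 := by
    simpa only [one_mul, hφ0] using integral_mul_periodicReflection (φ := φ) fun _ ↦ 1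
  have hf : f ∈ poissonClass α r β p := by
    refine ⟨fun x ↦ ?_, 0, ψ, hψper, ?_, ?_, fun _ ↦ rfl⟩
    · have hker (t : ℝ) : genPoissonKernel α r β (x + 2 * π - t)
          = genPoissonKernel α r β (x - t) := by
        rw [genPoissonKernel_eq_cosTail, add_sub_right_comm, cosTail_periodic]
      simp only [f, hker]
    · rwa [← eLpNorm_periodMeasure_of_periodic hψper p 0, zero_add] at hψ1
    · have hshift := hψper.intervalIntegral_add_eq 0 (-π)
      rw [zero_add, show -π + 2 * π = π by ring] at hshift
      rw [hshift, hψ0]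
  have hψint : Integrable ψ periodMeasure := MemLp.integrable hp
    ⟨(measurable_periodicReflection hφ).aestronglyMeasurable, hψ1.trans_lt ENNReal.one_lt_top⟩
  have hle := abs_sub_fourierSum_le_EnC hα hr β hr1 hp hf n 0
  rw [poissonIntegral_sub_fourierSum hα hr β hψint fun _ ↦ rfl] at hle
  simp only [zero_sub] at hle
  rw [integral_mul_periodicReflection] at hle
  exact (le_abs_self _).trans hle

end Class

/-! ### The normalized tail is close to a simple pole -/

section PowerIncrements

variable {x r : ℝ} (hr0 : 0 ≤ r) (hr1 : r ≤ 1)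
include hr0 hr1

lemma add_one_rpow_sub_rpow_le (hx : 0 < x) : (x + 1) ^ r - x ^ r ≤ r * x ^ (r - 1) := by
  have hbernoulli : (1 + 1 / x) ^ r ≤ 1 + r * (1 / x) :=
    rpow_one_add_le_one_add_mul_self (by linarith [one_div_pos.2 hx]) hr0 hr1
  calc (x + 1) ^ r - x ^ r
    _ = x ^ r * (1 + 1 / x) ^ r - x ^ r := by
      rw [← mul_rpow hx.le (by positivity), mul_add, mul_one_div_cancel hx.ne', mul_one]
    _ ≤ x ^ r * (1 + r * (1 / x)) - x ^ r := by gcongr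
    _ = r * x ^ (r - 1) := by
      rw [rpow_sub_one hx.ne']
      ring

lemma mul_add_one_rpow_le (hx : 0 ≤ x) : r * (x + 1) ^ (r - 1) ≤ (x + 1) ^ r - x ^ r := by
  have hx1 : 0 < x + 1 := by linarith
  have hinv : 1 / (x + 1) ≤ 1 := (div_le_one hx1).2 (by linarith)
  have hbernoulli : (1 + -(1 / (x + 1))) ^ r ≤ 1 + r * -(1 / (x + 1)) :=
    rpow_one_add_le_one_add_mul_self (by linarith) hr0 hr1
  calc r * (x + 1) ^ (r - 1)
    _ = (x + 1) ^ r - (x + 1) ^ r * (1 + r * -(1 / (x + 1))) := by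
      rw [rpow_sub_one hx1.ne']
      ring
    _ ≤ (x + 1) ^ r - (x + 1) ^ r * (1 + -(1 / (x + 1))) ^ r := by gcongr
    _ = (x + 1) ^ r - x ^ r := by
      rw [← mul_rpow hx1.le (by linarith), mul_add, mul_neg, mul_one_div_cancel hx1.ne', mul_one,
        add_neg_cancel_right]

end PowerIncrements

section GeometricLike

variable {a : ℕ → ℝ} {x : ℝ}

-- The potential is the exact remainder for the sequence satisfying the hypothesis with equality.
lemma sum_succ_mul_add_potential_le {M : ℝ} (hx : 0 ≤ x) (hM : 2 < M)
    (hstep : ∀ k : ℕ, a (k + 1) * (x + k + 1 + M) ≤ a k * (x + k + 1)) (N : ℕ) :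
    ∑ k ∈ Finset.range N, ((k : ℝ) + 1) * a k
      + (x + N + M) * ((N + 1) / (M - 2) + x / ((M - 1) * (M - 2))) * a N
      ≤ (x + M) * (x + M - 1) / ((M - 1) * (M - 2)) * a 0 := by
  have hM1 : 0 < M - 1 := by linarith
  have hM2 : 0 < M - 2 := by linarith
  induction N with
  | zero =>
    refine le_of_eq ?_
    simp only [Finset.range_zero, Finset.sum_empty, Nat.cast_zero]
    field_simp
    ring
  | succ k ih =>
    have hpotential :
        (x + k + 1 + M) * ((k + 1 + 1) / (M - 2) + x / ((M - 1) * (M - 2))) * a (k + 1)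
        ≤ (x + k + 1) * ((k + 1 + 1) / (M - 2) + x / ((M - 1) * (M - 2))) * a k := by
      have hweight : 0 ≤ ((k : ℝ) + 1 + 1) / (M - 2) + x / ((M - 1) * (M - 2)) := by positivity
      linarith [mul_le_mul_of_nonneg_right (hstep k) hweight]
    have hidentity : ((k : ℝ) + 1) * a k
          + (x + k + 1) * ((k + 1 + 1) / (M - 2) + x / ((M - 1) * (M - 2))) * a k
        = (x + k + M) * ((k + 1) / (M - 2) + x / ((M - 1) * (M - 2))) * a k := by
      field_simp
      ring
    rw [Finset.sum_range_succ]
    push_cast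
    rw [← add_assoc x]
    linarith

variable {δ : ℝ} (hδ : δ ≤ 1 / 14) (hxδ : 14 ≤ x * δ) (ha : ∀ k, 0 < a k) (ha0 : a 0 = 1)
  (hstep : ∀ k : ℕ, a (k + 1) * (x + k + 1 + x * δ) ≤ a k * (x + k + 1))
include hδ hxδ ha ha0 hstep

lemma sum_succ_mul_le (hx : 0 < x) (N : ℕ) :
    ∑ k ∈ Finset.range N, ((k : ℝ) + 1) * a k ≤ 2 / δ ^ 2 := by
  have hsum := sum_succ_mul_add_potential_le hx.le (by linarith : 2 < x * δ) hstep N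
  set M := x * δ with hM
  have hδM : δ = M / x := by rw [hM, mul_div_cancel_left₀ _ hx.ne']
  have hM1 : 0 < M - 1 := by linarith
  have hM2 : 0 < M - 2 := by linarith
  have hpotential : 0 ≤ (x + N + M) * ((N + 1) / (M - 2) + x / ((M - 1) * (M - 2))) * a N := by
    have := ha N
    positivity
  have hxM : 14 * M ≤ x := by nlinarith
  have hnum : (x + M) * (x + M - 1) ≤ 225 / 196 * x ^ 2 := by nlinarith
  have hden : 156 / 196 * M ^ 2 ≤ (M - 1) * (M - 2) := by nlinarith
  have hbound : (x + M) * (x + M - 1) / ((M - 1) * (M - 2)) ≤ 2 / δ ^ 2 := by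
    rw [hδM, div_pow, div_div_eq_mul_div, div_le_div_iff₀ (by positivity) (by positivity)]
    nlinarith [mul_le_mul_of_nonneg_right hnum (sq_nonneg M),
      mul_le_mul_of_nonneg_left hden (sq_nonneg x), mul_nonneg (sq_nonneg x) (sq_nonneg M)]
  rw [ha0, mul_one] at hsum
  linarith

lemma summable_succ_mul (hx : 0 < x) : Summable fun k : ℕ ↦ ((k : ℝ) + 1) * a k :=
  summable_of_sum_range_le (fun k ↦ mul_nonneg (by positivity) (ha k).le)
    (sum_succ_mul_le hδ hxδ ha ha0 hstep hx)

lemma tsum_succ_mul_le (hx : 0 < x) : ∑' k : ℕ, ((k : ℝ) + 1) * a k ≤ 2 / δ ^ 2 :=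
  Real.tsum_le_of_sum_range_le (fun k ↦ mul_nonneg (by positivity) (ha k).le)
    (sum_succ_mul_le hδ hxδ ha ha0 hstep hx)

end GeometricLike

lemma one_sub_mul_tsum_sub {a : ℕ → ℂ} {w : ℂ} (hs : Summable fun k ↦ a k * w ^ k) (q : ℂ) :
    (1 - q * w) * ∑' k, a k * w ^ k - a 0 = ∑' k, (a (k + 1) - q * a k) * w ^ (k + 1) := by
  have hshift : Summable fun k ↦ a (k + 1) * w ^ (k + 1) := (summable_nat_add_iff 1).2 hs
  have hmul : Summable fun k ↦ q * w * (a k * w ^ k) := hs.mul_left _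
  calc (1 - q * w) * ∑' k, a k * w ^ k - a 0
    _ = (∑' k, a k * w ^ k - a 0 * w ^ 0) - q * w * ∑' k, a k * w ^ k := by ring
    _ = ∑' k, a (k + 1) * w ^ (k + 1) - ∑' k, q * w * (a k * w ^ k) := by
      rw [hs.tsum_eq_zero_add, add_sub_cancel_left, ← hs.tsum_eq_zero_add, tsum_mul_left]
    _ = ∑' k, (a (k + 1) - q * a k) * w ^ (k + 1) := by
      rw [← hshift.tsum_sub hmul]
      exact tsum_congr fun k ↦ by ring

section ComplexExp

variable {z : ℂ} (hz0 : 0 ≤ z.re)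
include hz0

lemma norm_sub_one_add_exp_neg_le : ‖z - 1 + Complex.exp (-z)‖ ≤ 3 * ‖z‖ ^ 2 := by
  rcases le_or_gt ‖z‖ 1 with hz | hz
  · have htaylor := Complex.norm_exp_sub_one_sub_id_le (x := -z) (by rwa [norm_neg])
    rw [norm_neg, show Complex.exp (-z) - 1 - -z = z - 1 + Complex.exp (-z) by ring] at htaylor
    linarith [sq_nonneg ‖z‖]
  · have hexp : ‖Complex.exp (-z)‖ ≤ 1 := by
      rw [Complex.norm_exp, Complex.neg_re, exp_le_one_iff]
      linarith
    calc ‖z - 1 + Complex.exp (-z)‖ ≤ ‖z‖ + ‖(1 : ℂ)‖ + ‖Complex.exp (-z)‖ :=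
          (norm_add_le _ _).trans (by gcongr; exact norm_sub_le _ _)
      _ ≤ ‖z‖ + 1 + 1 := by
        rw [norm_one]
        gcongr
      _ ≤ 3 * ‖z‖ ^ 2 := by nlinarith

lemma norm_one_sub_exp_neg_ge (hz1 : z.re ≤ 1 / 14) (hzim : |z.im| ≤ π) :
    ‖z‖ / 2 ≤ ‖1 - Complex.exp (-z)‖ := by
  have hnorm : ‖1 - Complex.exp (-z)‖ ^ 2
      = (1 - exp (-z.re)) ^ 2 + 2 * exp (-z.re) * (1 - cos z.im) := by
    rw [← Complex.normSq_eq_norm_sq, Complex.normSq_apply]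
    simp only [Complex.sub_re, Complex.sub_im, Complex.exp_re, Complex.exp_im, Complex.one_re,
      Complex.one_im, Complex.neg_re, Complex.neg_im, cos_neg, sin_neg]
    linear_combination exp (-z.re) ^ 2 * sin_sq_add_cos_sq z.im
  have hexp_ge : 1 - z.re ≤ exp (-z.re) := by linarith [add_one_le_exp (-z.re)]
  have hre : z.re / 2 ≤ 1 - exp (-z.re) := by
    have hmul : exp (-z.re) * (z.re + 1) ≤ 1 :=
      calc exp (-z.re) * (z.re + 1) ≤ exp (-z.re) * exp z.re := by gcongr; exact add_one_le_exp _
        _ = 1 := by rw [← exp_add, neg_add_cancel, exp_zero]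
    nlinarith
  have him : 1 / 5 * z.im ^ 2 ≤ 1 - cos z.im := by
    have hpi : 1 / 5 ≤ 2 / π ^ 2 := by
      rw [div_le_div_iff₀ (by norm_num) (by positivity)]
      nlinarith [pi_lt_d2, pi_pos]
    linarith [cos_le_one_sub_mul_cos_sq hzim, mul_le_mul_of_nonneg_right hpi (sq_nonneg z.im)]
  refine le_of_sq_le_sq ?_ (norm_nonneg _)
  calc (‖z‖ / 2) ^ 2
    _ = (z.re / 2) ^ 2 + 1 / 4 * z.im ^ 2 := by
      rw [div_pow, ← Complex.normSq_eq_norm_sq, Complex.normSq_apply]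
      ring
    _ ≤ (1 - exp (-z.re)) ^ 2 + 2 * (13 / 14) * (1 / 5 * z.im ^ 2) :=
      add_le_add (by gcongr) (by linarith [sq_nonneg z.im])
    _ ≤ (1 - exp (-z.re)) ^ 2 + 2 * exp (-z.re) * (1 - cos z.im) := by
      gcongr
      linarith
    _ = ‖1 - Complex.exp (-z)‖ ^ 2 := hnorm.symm

lemma norm_sub_inv_le (hz1 : z.re ≤ 1 / 14) (hzim : |z.im| ≤ π) (hz : z ≠ 0) {A : ℂ} {η : ℝ}
    (hA : ‖(1 - Complex.exp (-z)) * A - 1‖ ≤ 2 * η) : ‖A - z⁻¹‖ ≤ 6 + 4 * η * ‖z⁻¹‖ := by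
  have hznorm : 0 < ‖z‖ := norm_pos_iff.2 hz
  have hden := norm_one_sub_exp_neg_ge hz0 hz1 hzim
  have hden0 : 0 < ‖1 - Complex.exp (-z)‖ := (half_pos hznorm).trans_le hden
  have hdecomp : A - z⁻¹ = (z - 1 + Complex.exp (-z)) / (z * (1 - Complex.exp (-z)))
      + ((1 - Complex.exp (-z)) * A - 1) / (1 - Complex.exp (-z)) := by
    have := norm_pos_iff.1 hden0
    field_simp
    ring
  rw [hdecomp]
  refine (norm_add_le _ _).trans (add_le_add ?_ ?_)
  · rw [norm_div, norm_mul, div_le_iff₀ (by positivity)]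
    nlinarith [norm_sub_one_add_exp_neg_le hz0]
  · have hη : 0 ≤ η := by linarith [norm_nonneg ((1 - Complex.exp (-z)) * A - 1)]
    rw [norm_div, norm_inv, div_le_iff₀ hden0]
    calc ‖(1 - Complex.exp (-z)) * A - 1‖ ≤ 4 * η * ‖z‖⁻¹ * (‖z‖ / 2) := by
          field_simp
          linarith
      _ ≤ 4 * η * ‖z‖⁻¹ * ‖1 - Complex.exp (-z)‖ := by gcongr

end ComplexExp

/-- The function `t ↦ 1 / (δ - i t)`, the model of the normalized kernel tail: it is the Laplace
transform of `e^{-δ x}` at `-i t`. -/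
noncomputable def simplePole (δ t : ℝ) : ℂ := ((δ : ℂ) - t * Complex.I)⁻¹

/-- `δ_n = α r n^{-(1-r)}`, the derivative of `x ↦ α x^r` at `n`: the rate at which the
coefficients `e^{-α k^r}` decay near `k = n`. -/
noncomputable def decayRate (α r : ℝ) (n : ℕ) : ℝ := α * r * (n : ℝ) ^ (-(1 - r))

/-- `ε_n = n^{-r} / (α r)`, the relative error made in replacing the coefficients by a geometric
progression. -/
noncomputable def relError (α r : ℝ) (n : ℕ) : ℝ := 1 / (α * r) * (n : ℝ) ^ (-r)

/-- The coefficients `e^{-α (n+k)^r}` relative to the leading one `e^{-α n^r}`. -/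
noncomputable def relCoef (α r : ℝ) (n k : ℕ) : ℝ :=
  exp (α * (n : ℝ) ^ r - α * ((n : ℝ) + k) ^ r)

/-- The tail of the kernel from frequency `n` on, divided by its leading coefficient; the index
`n - 1` is the order of the Fourier sum, and `n = 0` is a junk case. -/
noncomputable def normalizedTail (α r β : ℝ) (n : ℕ) (t : ℝ) : ℝ :=
  exp (α * (n : ℝ) ^ r) * poissonTail α r β (n - 1) t

/-- The range of parameters in which the asymptotics hold: the decay rate and the relative error
are both small. -/
structure PoissonRegime (α r : ℝ) (n : ℕ) : Prop where
  alpha_pos : 0 < α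
  r_pos : 0 < r
  r_lt_one : r < 1
  n_pos : 0 < n
  rate_le : decayRate α r n ≤ 1 / 14
  error_le : relError α r n ≤ 1 / 14

section Increments

variable {α r : ℝ} {n : ℕ} (hα : 0 ≤ α) (hr0 : 0 ≤ r) (hr1 : r ≤ 1) (hn : 0 < n) (k : ℕ)
include hα hr0 hr1 hn

lemma increment_le_decayRate :
    α * (((n : ℝ) + k + 1) ^ r - ((n : ℝ) + k) ^ r) ≤ decayRate α r n := by
  have hn' : (0 : ℝ) < n := Nat.cast_pos.2 hn
  calc α * (((n : ℝ) + k + 1) ^ r - ((n : ℝ) + k) ^ r)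
    _ ≤ α * (r * ((n : ℝ) + k) ^ (r - 1)) := by
      gcongr
      exact add_one_rpow_sub_rpow_le hr0 hr1 (by positivity)
    _ ≤ α * (r * (n : ℝ) ^ (r - 1)) := by
      gcongr α * (r * ?_)
      exact rpow_le_rpow_of_nonpos hn' (by simp) (by linarith)
    _ = decayRate α r n := by rw [decayRate, neg_sub, mul_assoc]

lemma decayRate_mul_le_increment :
    decayRate α r n * (n / (n + k + 1)) ≤ α * (((n : ℝ) + k + 1) ^ r - ((n : ℝ) + k) ^ r) := by
  have hn' : (0 : ℝ) < n := Nat.cast_pos.2 hn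
  have hratio : (n / (n + k + 1) : ℝ) ≤ (n / (n + k + 1) : ℝ) ^ (1 - r) :=
    self_le_rpow_of_le_one (by positivity) ((div_le_one (by positivity)).2 (by linarith))
      (by linarith)
  calc decayRate α r n * (n / (n + k + 1))
    _ ≤ decayRate α r n * (n / (n + k + 1)) ^ (1 - r) := by
      rw [decayRate]
      gcongr
    _ = α * (r * ((n : ℝ) + k + 1) ^ (r - 1)) := by
      rw [decayRate, div_rpow hn'.le (by positivity), rpow_neg hn'.le, ← neg_sub 1 r,
        rpow_neg (by positivity)]
      field_simp
    _ ≤ α * (((n : ℝ) + k + 1) ^ r - ((n : ℝ) + k) ^ r) := by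
      gcongr
      exact mul_add_one_rpow_le hr0 hr1 (by positivity)

end Increments

section RelCoef

variable (α r : ℝ) (n k : ℕ)

lemma relCoef_pos : 0 < relCoef α r n k := exp_pos _

lemma relCoef_zero : relCoef α r n 0 = 1 := by simp [relCoef]

lemma relCoef_succ : relCoef α r n (k + 1)
    = relCoef α r n k * exp (-(α * (((n : ℝ) + k + 1) ^ r - ((n : ℝ) + k) ^ r))) := by
  rw [relCoef, relCoef, ← exp_add]
  push_cast
  ring_nf

end RelCoef

lemma exp_neg_sub_exp_neg_le {x y : ℝ} (hx : 0 ≤ x) (hxy : x ≤ y) :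
    exp (-x) - exp (-y) ≤ y - x := by
  have hfactor : exp (-y) = exp (-x) * exp (-(y - x)) := by
    rw [← exp_add]
    ring_nf
  nlinarith [add_one_le_exp (-(y - x)), exp_pos (-x), exp_le_one_iff.2 (neg_nonpos.2 hx)]

lemma cast_sub_one_add_one {n : ℕ} (hn : 0 < n) : ((n - 1 : ℕ) : ℝ) + 1 = n := by
  rw [Nat.cast_pred hn, sub_add_cancel]

lemma ofReal_sub_mul_I_ne_zero {δ : ℝ} (hδ : 0 < δ) (t : ℝ) : (δ : ℂ) - t * Complex.I ≠ 0 :=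
  fun h ↦ hδ.ne' (by simpa using congrArg Complex.re h)

lemma exp_neg_sub_mul_I (δ t : ℝ) :
    Complex.exp (-((δ : ℂ) - t * Complex.I)) = (exp (-δ) : ℝ) * Complex.exp (t * Complex.I) := by
  rw [Complex.ofReal_exp, ← Complex.exp_add]
  push_cast
  ring_nf

namespace PoissonRegime

variable {α r : ℝ} {n : ℕ} (h : PoissonRegime α r n)
include h

lemma cast_pos : (0 : ℝ) < n := Nat.cast_pos.2 h.n_pos

lemma rate_pos : 0 < decayRate α r n :=
  mul_pos (mul_pos h.alpha_pos h.r_pos) (rpow_pos_of_pos h.cast_pos _)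

lemma error_pos : 0 < relError α r n :=
  mul_pos (one_div_pos.2 (mul_pos h.alpha_pos h.r_pos)) (rpow_pos_of_pos h.cast_pos _)

lemma mul_rate_mul_error : n * decayRate α r n * relError α r n = 1 := by
  have hαr := (mul_pos h.alpha_pos h.r_pos).ne'
  have hpow : (n : ℝ) * (n : ℝ) ^ (-(1 - r)) * (n : ℝ) ^ (-r) = 1 := by
    nth_rewrite 1 [← rpow_one (n : ℝ)]
    rw [← rpow_add h.cast_pos, ← rpow_add h.cast_pos]
    simp
  calc n * decayRate α r n * relError α r n
    _ = α * r * (1 / (α * r)) * (n * (n : ℝ) ^ (-(1 - r)) * (n : ℝ) ^ (-r)) := by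
      rw [decayRate, relError]
      ring
    _ = 1 := by rw [hpow, mul_one_div_cancel hαr, mul_one]

lemma error_eq : relError α r n = 1 / (n * decayRate α r n) :=
  eq_one_div_of_mul_eq_one_right h.mul_rate_mul_error

lemma fourteen_le : 14 ≤ n * decayRate α r n := by
  have herror := h.error_le
  rw [h.error_eq] at herror
  exact (one_div_le_one_div (mul_pos h.cast_pos h.rate_pos) (by norm_num)).1 herror

lemma relCoef_succ_mul_le (k : ℕ) :
    relCoef α r n (k + 1) * (n + k + 1 + n * decayRate α r n)
      ≤ relCoef α r n k * (n + k + 1) := by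
  have hn := h.cast_pos
  have hincr := decayRate_mul_le_increment h.alpha_pos.le h.r_pos.le h.r_lt_one.le h.n_pos k
  rw [relCoef_succ]
  set d := α * (((n : ℝ) + k + 1) ^ r - ((n : ℝ) + k) ^ r)
  calc relCoef α r n k * exp (-d) * (n + k + 1 + n * decayRate α r n)
    _ = relCoef α r n k * exp (-d)
        * ((n + k + 1) * (decayRate α r n * (n / (n + k + 1)) + 1)) := by
      field_simp
      ring
    _ ≤ relCoef α r n k * exp (-d) * ((n + k + 1) * exp d) := by
      have := relCoef_pos α r n k
      gcongr
      linarith [add_one_le_exp d]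
    _ = relCoef α r n k * (n + k + 1) * exp (-d + d) := by
      rw [exp_add]
      ring
    _ = relCoef α r n k * (n + k + 1) := by rw [neg_add_cancel, exp_zero, mul_one]

lemma abs_relCoef_succ_sub_le (k : ℕ) :
    |relCoef α r n (k + 1) - exp (-decayRate α r n) * relCoef α r n k|
      ≤ decayRate α r n / n * ((k + 1) * relCoef α r n k) := by
  have hn := h.cast_pos
  have hδ := h.rate_pos
  have ha := relCoef_pos α r n k
  have hle := increment_le_decayRate h.alpha_pos.le h.r_pos.le h.r_lt_one.le h.n_pos k
  have hge := decayRate_mul_le_increment h.alpha_pos.le h.r_pos.le h.r_lt_one.le h.n_pos k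
  rw [relCoef_succ]
  set d := α * (((n : ℝ) + k + 1) ^ r - ((n : ℝ) + k) ^ r)
  set δ := decayRate α r n
  have hd : 0 ≤ d := le_trans (by positivity) hge
  have hdiff : δ - d ≤ δ / n * (k + 1) :=
    calc δ - d ≤ δ - δ * (n / (n + k + 1)) := by linarith
      _ = δ * ((k + 1) / (n + k + 1)) := by
        field_simp
        ring
      _ ≤ δ * ((k + 1) / n) := by
        gcongr
        linarith [(Nat.cast_nonneg k : (0 : ℝ) ≤ k)]
      _ = δ / n * (k + 1) := by ring
  calc |relCoef α r n k * exp (-d) - exp (-δ) * relCoef α r n k|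
    _ = relCoef α r n k * (exp (-d) - exp (-δ)) := by
      rw [mul_comm (exp (-δ)), ← mul_sub, abs_of_nonneg]
      exact mul_nonneg ha.le (sub_nonneg.2 (exp_le_exp.2 (by linarith)))
    _ ≤ relCoef α r n k * (δ / n * (k + 1)) := by
      gcongr
      exact (exp_neg_sub_exp_neg_le hd hle).trans hdiff
    _ = δ / n * ((k + 1) * relCoef α r n k) := by ring

lemma summable_succ_mul_relCoef : Summable fun k : ℕ ↦ ((k : ℝ) + 1) * relCoef α r n k :=
  summable_succ_mul h.rate_le h.fourteen_le (relCoef_pos α r n) (relCoef_zero α r n)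
    h.relCoef_succ_mul_le h.cast_pos

lemma summable_relCoef_mul_pow {w : ℂ} (hw : ‖w‖ = 1) :
    Summable fun k : ℕ ↦ (relCoef α r n k : ℂ) * w ^ k := by
  refine Summable.of_norm_bounded h.summable_succ_mul_relCoef fun k ↦ ?_
  have ha := relCoef_pos α r n k
  rw [norm_mul, norm_pow, hw, one_pow, mul_one, Complex.norm_real, norm_of_nonneg ha.le]
  exact le_mul_of_one_le_left ha.le (by linarith [(Nat.cast_nonneg k : (0 : ℝ) ≤ k)])

lemma norm_one_sub_mul_tsum_relCoef_sub_one_le (t : ℝ) :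
    ‖(1 - Complex.exp (-(decayRate α r n - t * Complex.I)))
        * ∑' k : ℕ, (relCoef α r n k : ℂ) * Complex.exp (t * Complex.I) ^ k - 1‖
      ≤ 2 * relError α r n := by
  have hn := h.cast_pos
  have hδ := h.rate_pos
  have hw := Complex.norm_exp_ofReal_mul_I t
  have habel := one_sub_mul_tsum_sub (h.summable_relCoef_mul_pow hw) (exp (-decayRate α r n) : ℝ)
  rw [relCoef_zero, Complex.ofReal_one] at habel
  rw [exp_neg_sub_mul_I, habel]
  have hterm (k : ℕ) : ‖((relCoef α r n (k + 1) : ℂ)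
        - (exp (-decayRate α r n) : ℝ) * relCoef α r n k) * Complex.exp (t * Complex.I) ^ (k + 1)‖
      ≤ decayRate α r n / n * ((k + 1) * relCoef α r n k) := by
    rw [norm_mul, norm_pow, hw, one_pow, mul_one, ← Complex.ofReal_mul, ← Complex.ofReal_sub,
      Complex.norm_real]
    exact h.abs_relCoef_succ_sub_le k
  refine (tsum_of_norm_bounded (h.summable_succ_mul_relCoef.mul_left _).hasSum hterm).trans ?_
  calc ∑' k : ℕ, decayRate α r n / n * ((k + 1) * relCoef α r n k)
    _ ≤ decayRate α r n / n * (2 / decayRate α r n ^ 2) := by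
      rw [tsum_mul_left]
      gcongr
      exact tsum_succ_mul_le h.rate_le h.fourteen_le (relCoef_pos α r n) (relCoef_zero α r n)
        h.relCoef_succ_mul_le hn
    _ = 2 * relError α r n := by
      rw [h.error_eq]
      field_simp

lemma norm_tsum_relCoef_sub_simplePole_le {t : ℝ} (ht : |t| ≤ π) :
    ‖∑' k : ℕ, (relCoef α r n k : ℂ) * Complex.exp (t * Complex.I) ^ k
        - simplePole (decayRate α r n) t‖
      ≤ 6 + 4 * relError α r n * ‖simplePole (decayRate α r n) t‖ := by
  have hδ := h.rate_pos
  refine norm_sub_inv_le ?_ ?_ ?_ (ofReal_sub_mul_I_ne_zero hδ t)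
    (h.norm_one_sub_mul_tsum_relCoef_sub_one_le t)
  · simpa using hδ.le
  · simpa using h.rate_le
  · simpa using ht

lemma normalizedTail_eq_re (β t : ℝ) :
    normalizedTail α r β n t
      = (Complex.exp ((n * t - β * π / 2 : ℝ) * Complex.I)
        * ∑' k : ℕ, (relCoef α r n k : ℂ) * Complex.exp (t * Complex.I) ^ k).re := by
  have hs := h.summable_relCoef_mul_pow (Complex.norm_exp_ofReal_mul_I t)
  rw [← tsum_mul_left, Complex.re_tsum (hs.mul_left _), normalizedTail, poissonTail, cosTail,
    ← tsum_mul_left]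
  refine tsum_congr fun k ↦ ?_
  have hfreq : (k : ℝ) + (n - 1 : ℕ) + 1 = n + k := by
    rw [add_assoc, cast_sub_one_add_one h.n_pos, add_comm]
  have hexp : Complex.exp ((n * t - β * π / 2 : ℝ) * Complex.I)
        * ((relCoef α r n k : ℂ) * Complex.exp (t * Complex.I) ^ k)
      = relCoef α r n k * Complex.exp (((n + k) * t - β * π / 2 : ℝ) * Complex.I) := by
    rw [← Complex.exp_nat_mul, mul_left_comm, ← Complex.exp_add]
    push_cast
    ring_nf
  rw [hexp, Complex.re_ofReal_mul, Complex.exp_ofReal_mul_I_re, poissonCoef, ← mul_assoc,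
    ← exp_add, relCoef]
  push_cast
  rw [hfreq]
  ring_nf

end PoissonRegime

/-! ### Sampling at equally spaced nodes -/

/-- The left endpoint of the cell containing `t` when `[-π, π)` is cut into `n` cells of length
`2π / n`, the period of `cos (n t)`. -/
noncomputable def leftNode (n : ℕ) (t : ℝ) : ℝ := -π + 2 * π * ⌊n * (t + π) / (2 * π)⌋ / n

section LeftNode

variable {n : ℕ}

lemma measurable_leftNode : Measurable (leftNode n) := by
  unfold leftNode
  fun_prop

lemma leftNode_le (hn : 0 < n) (t : ℝ) : leftNode n t ≤ t := by
  have hfloor := Int.floor_le (n * (t + π) / (2 * π))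
  rw [le_div_iff₀ two_pi_pos] at hfloor
  rw [leftNode, neg_add_le_iff_le_add, div_le_iff₀ (Nat.cast_pos.2 hn)]
  linarith

lemma le_leftNode_add (hn : 0 < n) (t : ℝ) : t ≤ leftNode n t + 2 * π / n := by
  have hfloor := (Int.lt_floor_add_one (n * (t + π) / (2 * π))).le
  rw [div_le_iff₀ two_pi_pos] at hfloor
  rw [leftNode, add_assoc, ← add_div, le_neg_add_iff_add_le, le_div_iff₀ (Nat.cast_pos.2 hn)]
  linarith

lemma leftNode_eq (hn : 0 < n) {j : ℕ} {t : ℝ}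
    (ht : t ∈ Set.Ico (-π + 2 * π * j / n) (-π + 2 * π * (j + 1 : ℕ) / n)) :
    leftNode n t = -π + 2 * π * j / n := by
  have hn' : (0 : ℝ) < n := Nat.cast_pos.2 hn
  have hleft := (div_le_iff₀ hn').1 (neg_add_le_iff_le_add.1 ht.1)
  have hright := (lt_div_iff₀ hn').1 (lt_neg_add_iff_add_lt.1 ht.2)
  have hfloor : ⌊n * (t + π) / (2 * π)⌋ = (j : ℤ) := by
    rw [Int.floor_eq_iff, le_div_iff₀ two_pi_pos, div_lt_iff₀ two_pi_pos]
    push_cast at hright ⊢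
    constructor <;> linarith
  rw [leftNode, hfloor, Int.cast_natCast]

lemma node_le_succ_node (n j : ℕ) :
    -π + 2 * π * j / n ≤ -π + 2 * π * (j + 1 : ℕ) / n := by
  gcongr
  exact j.le_succ

section Cells

variable {F : ℝ → ℝ} (hF : Function.Periodic F (2 * π)) (hn : 0 < n) (c θ : ℝ → ℝ)
include hF hn

lemma integral_cell_comp_leftNode_mul (j : ℕ) :
    ∫ t in (-π + 2 * π * j / n)..(-π + 2 * π * (j + 1 : ℕ) / n),
        c (leftNode n t) * F (n * t + θ (leftNode n t))
      = c (-π + 2 * π * j / n) * ((n : ℝ)⁻¹ * ∫ u in 0..2 * π, F u) := by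
  have hn' : (n : ℝ) ≠ 0 := Nat.cast_ne_zero.2 hn.ne'
  have hab := node_le_succ_node n j
  set a := -π + 2 * π * j / n with ha
  set b := -π + 2 * π * (j + 1 : ℕ) / n with hb
  have hperiod : n * b + θ a = n * a + θ a + 2 * π := by
    rw [ha, hb]
    push_cast
    field_simp
    ring
  calc ∫ t in a..b, c (leftNode n t) * F (n * t + θ (leftNode n t))
    _ = ∫ t in a..b, c a * F (n * t + θ a) := by
      rw [intervalIntegral.integral_of_le hab, intervalIntegral.integral_of_le hab,
        ← integral_Ico_eq_integral_Ioc, ← integral_Ico_eq_integral_Ioc]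
      refine setIntegral_congr_fun measurableSet_Ico fun t ht ↦ ?_
      simp only [leftNode_eq hn ht, a]
    _ = c a * ((n : ℝ)⁻¹ * ∫ u in 0..2 * π, F u) := by
      rw [intervalIntegral.integral_const_mul, intervalIntegral.integral_comp_mul_add _ hn',
        hperiod, hF.intervalIntegral_add_eq _ 0, zero_add, smul_eq_mul]

variable (hFint : IntervalIntegrable F volume 0 (2 * π))
include hFint

lemma intervalIntegrable_cell_comp_leftNode_mul (j : ℕ) :
    IntervalIntegrable (fun t ↦ c (leftNode n t) * F (n * t + θ (leftNode n t))) volume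
      (-π + 2 * π * j / n) (-π + 2 * π * (j + 1 : ℕ) / n) := by
  have hn' : (n : ℝ) ≠ 0 := Nat.cast_ne_zero.2 hn.ne'
  have hab := node_le_succ_node n j
  set a := -π + 2 * π * j / n
  set b := -π + 2 * π * (j + 1 : ℕ) / n
  have hcomp : IntervalIntegrable (fun t ↦ F (n * t + θ a)) volume a b := by
    simpa [hn'] using ((hF.intervalIntegrable₀ two_pi_pos.ne' hFint (n * a + θ a)
      (n * b + θ a)).comp_add_right (θ a)).comp_mul_left (c := (n : ℝ))
  refine (hcomp.const_mul (c a)).congr_ae ?_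
  rw [Set.uIoc_of_le hab, ← Measure.restrict_congr_set Ico_ae_eq_Ioc]
  filter_upwards [ae_restrict_mem measurableSet_Ico] with t ht
  rw [leftNode_eq hn ht]

lemma integral_comp_leftNode_mul_eq_sum :
    ∫ t in (-π)..π, c (leftNode n t) * F (n * t + θ (leftNode n t))
      = (∑ j ∈ Finset.range n, c (-π + 2 * π * j / n)) * ((n : ℝ)⁻¹ * ∫ u in 0..2 * π, F u) := by
  have hn' : (n : ℝ) ≠ 0 := Nat.cast_ne_zero.2 hn.ne'
  have hcells := intervalIntegral.sum_integral_adjacent_intervals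
    fun j (_ : j < n) ↦ intervalIntegrable_cell_comp_leftNode_mul hF hn c θ hFint j
  have hleft : -π + 2 * π * (0 : ℕ) / n = -π := by simp
  have hright : -π + 2 * π * n / n = π := by
    field_simp
    ring
  rw [hleft, hright] at hcells
  rw [← hcells, Finset.sum_mul]
  exact Finset.sum_congr rfl fun j _ ↦ integral_cell_comp_leftNode_mul hF hn c θ j

/- On each cell the oscillating factor runs through exactly one full period, so it may be replaced
by its mean. -/
lemma integral_comp_leftNode_mul_eq_mean_mul :
    ∫ t, c (leftNode n t) * F (n * t + θ (leftNode n t)) ∂periodMeasure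
      = (1 / (2 * π) * ∫ u in 0..2 * π, F u) * ∫ t, c (leftNode n t) ∂periodMeasure := by
  have hone := integral_comp_leftNode_mul_eq_sum (F := fun _ ↦ 1) (fun _ ↦ rfl) hn c θ (by simp)
  simp only [mul_one, intervalIntegral.integral_const, sub_zero, smul_eq_mul] at hone
  rw [← intervalIntegral.integral_of_le (by linarith [pi_pos]),
    ← intervalIntegral.integral_of_le (by linarith [pi_pos]),
    integral_comp_leftNode_mul_eq_sum hF hn c θ hFint, hone]
  field_simp

end Cells

end LeftNode

/-! ### The step model of the normalized tail -/

section SimplePole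

variable {δ : ℝ} (hδ : 0 < δ)
include hδ

lemma continuous_simplePole : Continuous (simplePole δ) := by
  unfold simplePole
  exact Continuous.inv₀ (by fun_prop) (ofReal_sub_mul_I_ne_zero hδ)

lemma norm_simplePole_pos (t : ℝ) : 0 < ‖simplePole δ t‖ :=
  norm_pos_iff.2 (inv_ne_zero (ofReal_sub_mul_I_ne_zero hδ t))

lemma norm_simplePole_le (t : ℝ) : ‖simplePole δ t‖ ≤ 1 / δ := by
  rw [simplePole, norm_inv, one_div]
  refine inv_anti₀ hδ ?_
  simpa [abs_of_pos hδ] using Complex.abs_re_le_norm ((δ : ℂ) - t * Complex.I)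

lemma norm_simplePole_zero : ‖simplePole δ 0‖ = 1 / δ := by
  simp [simplePole, abs_of_pos hδ]

lemma norm_simplePole_sub_le (t u : ℝ) :
    ‖simplePole δ t - simplePole δ u‖ ≤ |t - u| / δ * ‖simplePole δ t‖ := by
  have ht := ofReal_sub_mul_I_ne_zero hδ t
  have hu := ofReal_sub_mul_I_ne_zero hδ u
  have hsub : simplePole δ t - simplePole δ u
      = ((t - u : ℝ) * Complex.I) * simplePole δ u * simplePole δ t := by
    rw [simplePole, simplePole, inv_sub_inv ht hu, div_eq_mul_inv, mul_inv]
    push_cast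
    ring
  rw [hsub, norm_mul, norm_mul, norm_mul, Complex.norm_I, mul_one, Complex.norm_real, norm_eq_abs,
    div_eq_mul_one_div]
  gcongr
  exact norm_simplePole_le hδ u

lemma norm_simplePole_sub_leftNode_le {n : ℕ} (hn : 0 < n) (t : ℝ) :
    ‖simplePole δ t - simplePole δ (leftNode n t)‖
      ≤ 2 * π * (1 / (n * δ)) * ‖simplePole δ t‖ := by
  have hdist : |t - leftNode n t| ≤ 2 * π / n := by
    rw [abs_of_nonneg (sub_nonneg.2 (leftNode_le hn t))]
    linarith [le_leftNode_add hn t]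
  calc ‖simplePole δ t - simplePole δ (leftNode n t)‖
    _ ≤ |t - leftNode n t| / δ * ‖simplePole δ t‖ := norm_simplePole_sub_le hδ _ _
    _ ≤ 2 * π / n / δ * ‖simplePole δ t‖ := by gcongr
    _ = 2 * π * (1 / (n * δ)) * ‖simplePole δ t‖ := by
      rw [div_div, mul_one_div]

lemma memLp_simplePole (s : ℝ≥0∞) : MemLp (simplePole δ) s periodMeasure :=
  memLp_periodMeasure_of_continuous (continuous_simplePole hδ) s

lemma memLp_simplePole_comp_leftNode (n : ℕ) (s : ℝ≥0∞) :
    MemLp (simplePole δ ∘ leftNode n) s periodMeasure :=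
  MemLp.of_bound
    ((continuous_simplePole hδ).measurable.comp measurable_leftNode).aestronglyMeasurable (1 / δ)
    (.of_forall fun _ ↦ norm_simplePole_le hδ _)

end SimplePole

/-- The real part of `e^{i (n t - b)} / (δ - i t)`, with the pole `1 / (δ - i t)` replaced by its
value at the left end of the cell of `t`. It models the normalized tail; within a cell only the
factor `cos (n t + ⋯)` varies. -/
noncomputable def stepWave (δ b : ℝ) (n : ℕ) (t : ℝ) : ℝ :=
  ‖simplePole δ (leftNode n t)‖ * cos (n * t + ((simplePole δ (leftNode n t)).arg - b))

lemma re_exp_mul_I_mul (w : ℂ) (y : ℝ) :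
    (Complex.exp (y * Complex.I) * w).re = ‖w‖ * cos (y + w.arg) := by
  have hpolar : Complex.exp (y * Complex.I) * w
      = ‖w‖ * Complex.exp ((y + w.arg : ℝ) * Complex.I) := by
    nth_rewrite 1 [← Complex.norm_mul_exp_arg_mul_I w]
    push_cast
    rw [add_mul, Complex.exp_add]
    ring
  rw [hpolar, Complex.re_ofReal_mul, Complex.exp_ofReal_mul_I_re]

lemma stepWave_eq_re (δ b : ℝ) (n : ℕ) (t : ℝ) :
    stepWave δ b n t
      = (Complex.exp ((n * t - b : ℝ) * Complex.I) * simplePole δ (leftNode n t)).re := by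
  rw [re_exp_mul_I_mul, stepWave]
  ring_nf

lemma abs_stepWave_le (δ b : ℝ) (n : ℕ) (t : ℝ) :
    |stepWave δ b n t| ≤ ‖simplePole δ (leftNode n t)‖ := by
  rw [stepWave, abs_mul, abs_norm]
  exact mul_le_of_le_one_right (norm_nonneg _) (abs_cos_le_one _)

section StepWave

variable {δ : ℝ} (hδ : 0 < δ) (b : ℝ) (n : ℕ)
include hδ

lemma measurable_stepWave : Measurable (stepWave δ b n) := by
  have hpole := (continuous_simplePole hδ).measurable.comp (measurable_leftNode (n := n))
  exact hpole.norm.mul (measurable_cos.comp ((measurable_const_mul (n : ℝ)).add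
    ((Complex.measurable_arg.comp hpole).sub_const b)))

lemma memLp_stepWave (s : ℝ≥0∞) : MemLp (stepWave δ b n) s periodMeasure :=
  MemLp.of_bound (measurable_stepWave hδ b n).aestronglyMeasurable (1 / δ)
    (.of_forall fun t ↦ (abs_stepWave_le δ b n t).trans (norm_simplePole_le hδ _))

end StepWave

lemma PoissonRegime.abs_normalizedTail_sub_stepWave_le {α r : ℝ} {n : ℕ} (h : PoissonRegime α r n)
    (β : ℝ) {t : ℝ} (ht : |t| ≤ π) :
    |normalizedTail α r β n t - stepWave (decayRate α r n) (β * π / 2) n t|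
      ≤ 6 + (4 + 2 * π) * relError α r n * ‖simplePole (decayRate α r n) t‖ := by
  have hpole := h.norm_tsum_relCoef_sub_simplePole_le ht
  have hnode := norm_simplePole_sub_leftNode_le h.rate_pos h.n_pos t
  rw [← h.error_eq] at hnode
  rw [h.normalizedTail_eq_re, stepWave_eq_re, ← Complex.sub_re, ← mul_sub]
  refine (Complex.abs_re_le_norm _).trans ?_
  rw [norm_mul, Complex.norm_exp_ofReal_mul_I, one_mul]
  refine (norm_sub_le_norm_sub_add_norm_sub _ (simplePole (decayRate α r n) t) _).trans ?_
  linarith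

section LpNorm

variable {Ω E : Type*} {mΩ : MeasurableSpace Ω} {μ : Measure Ω} [NormedAddCommGroup E]
  {s : ℝ≥0∞}

lemma lpNorm_mono_ae_real {f : Ω → E} {g : Ω → ℝ} (hg : MemLp g s μ)
    (hfg : ∀ᵐ x ∂μ, ‖f x‖ ≤ g x) : lpNorm f s μ ≤ lpNorm g s μ := by
  by_cases hf : AEStronglyMeasurable f μ
  · rw [← toReal_eLpNorm hf, ← toReal_eLpNorm hg.1]
    exact ENNReal.toReal_mono hg.eLpNorm_ne_top (eLpNorm_mono_ae_real hfg)
  · rw [lpNorm_of_not_aestronglyMeasurable hf]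
    exact lpNorm_nonneg

lemma lpNorm_const_mul (c : ℝ) (f : Ω → ℝ) :
    lpNorm (fun x ↦ c * f x) s μ = |c| * lpNorm f s μ := by
  simpa using! lpNorm_const_smul (p := s) c f μ

lemma lpNorm_le_mul_lpNorm_of_norm_le {F : Type*} [NormedAddCommGroup F] {f : Ω → E} {g : Ω → F}
    (hg : MemLp g s μ) {c : ℝ} (hc : 0 ≤ c) (hfg : ∀ x, ‖f x‖ ≤ c * ‖g x‖) :
    lpNorm f s μ ≤ c * lpNorm g s μ := by
  calc lpNorm f s μ
    _ ≤ lpNorm (fun x ↦ c * ‖g x‖) s μ := lpNorm_mono_real (hg.norm.const_mul c) hfg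
    _ = c * lpNorm g s μ := by rw [lpNorm_const_mul, abs_of_nonneg hc, lpNorm_norm hg.1]

lemma abs_lpNorm_sub_lpNorm_le {f g : Ω → E} (hf : MemLp f s μ) (hg : MemLp g s μ) (hs : 1 ≤ s) :
    |lpNorm f s μ - lpNorm g s μ| ≤ lpNorm (f - g) s μ := by
  have hfg := lpNorm_le_lpNorm_add_lpNorm_sub' (f := f) hg hs
  have hgf := lpNorm_le_lpNorm_add_lpNorm_sub (f := g) hf hs
  rw [abs_le]
  constructor <;> linarith

lemma lpNorm_rpow_toReal {f : Ω → ℝ} (hs0 : s ≠ 0) (hs : s ≠ ∞) (hf : AEStronglyMeasurable f μ) :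
    lpNorm f s μ ^ s.toReal = ∫ x, |f x| ^ s.toReal ∂μ := by
  rw [lpNorm_eq_integral_norm_rpow_toReal hs0 hs hf,
    rpow_inv_rpow (integral_nonneg fun _ ↦ by positivity) (ENNReal.toReal_ne_zero.2 ⟨hs0, hs⟩)]
  rfl

end LpNorm

lemma two_pi_rpow_inv_toReal_le {s : ℝ≥0∞} (hs : 1 ≤ s) : (2 * π) ^ s.toReal⁻¹ ≤ 2 * π := by
  refine rpow_le_self_of_one_le (by linarith [pi_gt_three]) ?_
  rw [← ENNReal.toReal_inv]
  exact ENNReal.toReal_le_of_le_ofReal one_pos.le (by simpa using hs)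

/-- The `L_s` norm of `cos` for the normalized Lebesgue measure `dt / 2π` on a period. -/
noncomputable def cosMean (s : ℝ≥0∞) : ℝ := cosNorm s / (2 * π) ^ s.toReal⁻¹

lemma cosNorm_eq_lpNorm (s : ℝ≥0∞) : cosNorm s = lpNorm cos s periodMeasure := by
  have hshift := eLpNorm_periodMeasure_of_periodic cos_periodic s 0
  rw [zero_add] at hshift
  rw [cosNorm, hshift, toReal_eLpNorm measurable_cos.aestronglyMeasurable]

lemma cosMean_nonneg (s : ℝ≥0∞) : 0 ≤ cosMean s := by
  rw [cosMean, cosNorm_eq_lpNorm]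
  exact div_nonneg lpNorm_nonneg (rpow_nonneg two_pi_pos.le _)

lemma cosMean_le_one {s : ℝ≥0∞} (hs : s ≠ 0) : cosMean s ≤ 1 := by
  rw [cosMean, cosNorm_eq_lpNorm, div_le_one (by positivity)]
  have hone := lpNorm_mono_real (f := cos) (μ := periodMeasure) (memLp_const (1 : ℝ) (p := s))
    abs_cos_le_one
  rwa [lpNorm_const hs periodMeasure_ne_zero, periodMeasure_real_univ, norm_one, one_mul] at hone

lemma lpNorm_stepWave {δ : ℝ} (hδ : 0 < δ) (b : ℝ) {n : ℕ} (hn : 0 < n) {s : ℝ≥0∞}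
    (hs0 : s ≠ 0) (hs : s ≠ ∞) :
    lpNorm (stepWave δ b n) s periodMeasure
      = cosMean s * lpNorm (simplePole δ ∘ leftNode n) s periodMeasure := by
  have hmean := integral_comp_leftNode_mul_eq_mean_mul (F := fun u ↦ |cos u| ^ s.toReal)
    (fun u ↦ by simp only [cos_add_two_pi]) hn (fun u ↦ ‖simplePole δ u‖ ^ s.toReal)
    (fun u ↦ (simplePole δ u).arg - b)
    ((continuous_cos.abs.rpow_const fun _ ↦ .inr ENNReal.toReal_nonneg).intervalIntegrable _ _)
  have hcos : cosNorm s = (∫ u in 0..2 * π, |cos u| ^ s.toReal) ^ s.toReal⁻¹ := by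
    rw [cosNorm, toReal_eLpNorm measurable_cos.aestronglyMeasurable,
      lpNorm_eq_integral_norm_rpow_toReal hs0 hs measurable_cos.aestronglyMeasurable,
      intervalIntegral.integral_of_le two_pi_pos.le]
    rfl
  have hcos_nonneg : 0 ≤ ∫ u in 0..2 * π, |cos u| ^ s.toReal :=
    intervalIntegral.integral_nonneg two_pi_pos.le fun _ _ ↦ by positivity
  have hpow (t : ℝ) : ‖stepWave δ b n t‖ ^ s.toReal = ‖simplePole δ (leftNode n t)‖ ^ s.toReal
      * |cos (n * t + ((simplePole δ (leftNode n t)).arg - b))| ^ s.toReal := by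
    rw [stepWave, norm_mul, norm_norm, mul_rpow (norm_nonneg _) (norm_nonneg _), norm_eq_abs]
  rw [lpNorm_eq_integral_norm_rpow_toReal hs0 hs (memLp_stepWave hδ b n s).1,
    lpNorm_eq_integral_norm_rpow_toReal hs0 hs (memLp_simplePole_comp_leftNode hδ n s).1]
  simp_rw [hpow, Function.comp_apply]
  rw [hmean, mul_rpow (by positivity) (integral_nonneg fun _ ↦ by positivity),
    mul_rpow (by positivity) hcos_nonneg, ← hcos, cosMean, one_div, inv_rpow two_pi_pos.le]
  ring

namespace PoissonRegime

variable {α r : ℝ} {n : ℕ} (h : PoissonRegime α r n) {s : ℝ≥0∞} (hs : 1 ≤ s)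
include h hs

lemma lpNorm_normalizedTail_sub_stepWave_le (β : ℝ) :
    lpNorm (normalizedTail α r β n - stepWave (decayRate α r n) (β * π / 2) n) s periodMeasure
      ≤ (4 + 2 * π) * relError α r n * lpNorm (simplePole (decayRate α r n)) s periodMeasure
        + 12 * π := by
  set δ := decayRate α r n
  have hε := h.error_pos
  have hpole := memLp_simplePole h.rate_pos s
  have hconst : MemLp (fun _ : ℝ ↦ (6 : ℝ)) s periodMeasure := memLp_const 6
  have hbound : MemLp (fun t ↦ (4 + 2 * π) * relError α r n * ‖simplePole δ t‖) s periodMeasure :=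
    hpole.norm.const_mul _
  calc lpNorm (normalizedTail α r β n - stepWave δ (β * π / 2) n) s periodMeasure
    _ ≤ lpNorm ((fun _ ↦ 6) + fun t ↦ (4 + 2 * π) * relError α r n * ‖simplePole δ t‖) s
        periodMeasure := by
      refine lpNorm_mono_ae_real (hconst.add hbound) ?_
      filter_upwards [ae_restrict_mem measurableSet_Ioc] with t ht
      exact h.abs_normalizedTail_sub_stepWave_le β (abs_le.2 ⟨ht.1.le, ht.2⟩)
    _ ≤ 6 * (2 * π) ^ s.toReal⁻¹
        + (4 + 2 * π) * relError α r n * lpNorm (simplePole δ) s periodMeasure := by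
      refine (lpNorm_add_le hconst hs).trans_eq ?_
      rw [lpNorm_const (one_pos.trans_le hs).ne' periodMeasure_ne_zero, periodMeasure_real_univ,
        lpNorm_const_mul, lpNorm_norm hpole.1, abs_of_pos (by positivity), norm_ofNat]
    _ ≤ _ := by linarith [two_pi_rpow_inv_toReal_le hs]

lemma abs_lpNorm_simplePole_comp_leftNode_sub_le :
    |lpNorm (simplePole (decayRate α r n) ∘ leftNode n) s periodMeasure
        - lpNorm (simplePole (decayRate α r n)) s periodMeasure|
      ≤ 2 * π * relError α r n * lpNorm (simplePole (decayRate α r n)) s periodMeasure := by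
  have hε := h.error_pos
  have hpole := memLp_simplePole h.rate_pos s
  rw [abs_sub_comm]
  refine (abs_lpNorm_sub_lpNorm_le hpole
    (memLp_simplePole_comp_leftNode h.rate_pos n s) hs).trans ?_
  refine lpNorm_le_mul_lpNorm_of_norm_le hpole (by positivity) fun t ↦ ?_
  rw [h.error_eq]
  exact norm_simplePole_sub_leftNode_le h.rate_pos h.n_pos t

end PoissonRegime

/-! ### Extremal functions -/

section NormingFun

variable {Ω : Type*} {mΩ : MeasurableSpace Ω} {μ : Measure Ω} {s p : ℝ≥0∞} {g : Ω → ℝ}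

/-- The function `sign g · |g| ^ (s - 1)`, which up to normalization turns Hölder's inequality for
`g ∈ L_s` into an equality. -/
noncomputable def normingFun (s : ℝ≥0∞) (g : Ω → ℝ) (x : Ω) : ℝ :=
  SignType.sign (g x) * |g x| ^ (s.toReal - 1)

lemma measurable_sign_coe : Measurable fun x : ℝ ↦ (SignType.sign x : ℝ) := by
  have hsign (x : ℝ) : (SignType.sign x : ℝ) = if 0 < x then 1 else if x < 0 then -1 else 0 := by
    rw [sign_apply]
    split_ifs <;> simp
  simp only [hsign]
  exact Measurable.ite measurableSet_Ioi measurable_const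
    (Measurable.ite measurableSet_Iio measurable_const measurable_const)

lemma abs_sign_coe_le_one (x : ℝ) : |(SignType.sign x : ℝ)| ≤ 1 := by
  rcases lt_trichotomy x 0 with hx | hx | hx <;> simp [hx]

lemma measurable_normingFun (hg : Measurable g) (s : ℝ≥0∞) : Measurable (normingFun s g) :=
  (measurable_sign_coe.comp hg).mul (hg.abs.pow_const _)

lemma abs_normingFun_le (s : ℝ≥0∞) (g : Ω → ℝ) (x : Ω) :
    |normingFun s g x| ≤ |g x| ^ (s.toReal - 1) := by
  rw [normingFun, abs_mul, abs_rpow_of_nonneg (abs_nonneg _), abs_abs]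
  exact mul_le_of_le_one_left (by positivity) (abs_sign_coe_le_one _)

lemma mul_normingFun (hs : s.toReal ≠ 0) (g : Ω → ℝ) (x : Ω) :
    g x * normingFun s g x = |g x| ^ s.toReal := by
  rw [normingFun, ← mul_assoc, self_mul_sign,
    ← rpow_one_add' (abs_nonneg _) (by simpa using hs), add_sub_cancel]

lemma eLpNorm_normingFun_le [hsp : ENNReal.HolderConjugate s p] (hs : s ≠ ∞) :
    eLpNorm (normingFun s g) p μ ≤ eLpNorm g s μ ^ (s.toReal - 1) := by
  rcases eq_or_ne p ∞ with rfl | hp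
  · obtain rfl : s = 1 := by simpa using hsp.inv_add_inv_eq_inv
    have hone := eLpNormEssSup_le_of_ae_bound (f := normingFun 1 g) (μ := μ) (C := 1)
      (ae_of_all _ fun x ↦ by simpa using abs_normingFun_le 1 g x)
    simpa using hone
  · have hconj := ENNReal.HolderConjugate.toReal_of_ne_top hs hp
    have hexp : p * ENNReal.ofReal (s.toReal - 1) = s := by
      rw [← ENNReal.ofReal_toReal hp, ← ENNReal.ofReal_mul ENNReal.toReal_nonneg, mul_comm,
        hconj.sub_one_mul_conj, ENNReal.ofReal_toReal hs]
    calc eLpNorm (normingFun s g) p μ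
      _ ≤ eLpNorm (fun x ↦ ‖g x‖ ^ (s.toReal - 1)) p μ :=
        eLpNorm_mono_real (abs_normingFun_le s g)
      _ = eLpNorm g s μ ^ (s.toReal - 1) := by
        rw [eLpNorm_norm_rpow g hconj.sub_one_pos, hexp]

lemma exists_integral_mul_eq_lpNorm [hsp : ENNReal.HolderConjugate s p] (hs : s ≠ ∞)
    (hg : Measurable g) (hgLp : MemLp g s μ) (hmean : ∫ x, normingFun s g x ∂μ = 0) :
    ∃ φ : Ω → ℝ, Measurable φ ∧ eLpNorm φ p μ ≤ 1 ∧ ∫ x, φ x ∂μ = 0 ∧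
      ∫ x, g x * φ x ∂μ = lpNorm g s μ := by
  have hs0 : s ≠ 0 := hsp.ne_zero
  have hs0' : s.toReal ≠ 0 := ENNReal.toReal_ne_zero.2 ⟨hs0, hs⟩
  set L := lpNorm g s μ with hL
  have hL_nonneg : 0 ≤ L := lpNorm_nonneg
  rcases hL_nonneg.eq_or_lt with hL0 | hL_pos
  · exact ⟨0, measurable_zero, by simp, by simp, by simpa using hL0⟩
  refine ⟨fun x ↦ (L ^ (s.toReal - 1))⁻¹ * normingFun s g x,
    (measurable_normingFun hg s).const_mul _, ?_, ?_, ?_⟩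
  · have hnorm : eLpNorm g s μ = ENNReal.ofReal L := by
      rw [hL, ← toReal_eLpNorm hgLp.1, ENNReal.ofReal_toReal hgLp.eLpNorm_ne_top]
    have hle : eLpNorm (normingFun s g) p μ ≤ ENNReal.ofReal (L ^ (s.toReal - 1)) := by
      rw [← ENNReal.ofReal_rpow_of_pos hL_pos, ← hnorm]
      exact eLpNorm_normingFun_le hs
    have hpow : 0 < L ^ (s.toReal - 1) := by positivity
    calc eLpNorm ((L ^ (s.toReal - 1))⁻¹ • normingFun s g) p μ
      _ ≤ ENNReal.ofReal (L ^ (s.toReal - 1))⁻¹ * ENNReal.ofReal (L ^ (s.toReal - 1)) := by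
        rw [eLpNorm_const_smul, enorm_of_nonneg (by positivity)]
        gcongr
      _ = 1 := by
        rw [← ENNReal.ofReal_mul (by positivity), inv_mul_cancel₀ hpow.ne', ENNReal.ofReal_one]
  · rw [integral_const_mul, hmean, mul_zero]
  · simp_rw [mul_left_comm (g _), mul_normingFun hs0' g]
    rw [integral_const_mul, ← lpNorm_rpow_toReal hs0 hs hgLp.1, ← hL, rpow_sub_one hL_pos.ne']
    field_simp

end NormingFun

lemma integral_eq_zero_of_antiperiodic {F : ℝ → ℝ} {c : ℝ} (hF : Function.Antiperiodic F c) :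
    ∫ u in 0..2 * c, F u = 0 := by
  have hper := hF.periodic_two_mul.intervalIntegral_add_eq c 0
  have hshift := intervalIntegral.integral_comp_add_right (a := 0) (b := 2 * c) F c
  simp only [hF _, intervalIntegral.integral_neg, zero_add] at hshift
  rw [zero_add, add_comm c] at hper
  linarith

lemma integral_normingFun_stepWave {δ : ℝ} (hδ : 0 < δ) (b : ℝ) {n : ℕ} (hn : 0 < n) {s : ℝ≥0∞}
    (hs1 : 1 ≤ s) (hs : s ≠ ∞) : ∫ t, normingFun s (stepWave δ b n) t ∂periodMeasure = 0 := by
  have hs1' : 1 ≤ s.toReal := by simpa using ENNReal.toReal_mono hs hs1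
  have hanti : Function.Antiperiodic (normingFun s cos) π := fun u ↦ by
    simp only [normingFun, cos_add_pi, abs_neg, Left.sign_neg, SignType.coe_neg, neg_mul]
  have hfactor (t : ℝ) : normingFun s (stepWave δ b n) t
      = ‖simplePole δ (leftNode n t)‖ ^ (s.toReal - 1)
        * normingFun s cos (n * t + ((simplePole δ (leftNode n t)).arg - b)) := by
    rw [normingFun, normingFun, stepWave, abs_mul, abs_norm,
      mul_rpow (norm_nonneg _) (abs_nonneg _), sign_mul, sign_pos (norm_simplePole_pos hδ _),
      one_mul]
    ring
  have h_int : IntervalIntegrable (normingFun s cos) volume 0 (2 * π) := by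
    refine (intervalIntegrable_const (c := (1 : ℝ))).mono_fun
      (measurable_normingFun measurable_cos s).aestronglyMeasurable (ae_of_all _ fun u ↦ ?_)
    rw [norm_one]
    exact (abs_normingFun_le s cos u).trans
      (rpow_le_one (abs_nonneg _) (abs_cos_le_one u) (sub_nonneg.2 hs1'))
  simp_rw [hfactor]
  rw [integral_comp_leftNode_mul_eq_mean_mul hanti.periodic_two_mul hn
    (fun u ↦ ‖simplePole δ u‖ ^ (s.toReal - 1)) (fun u ↦ (simplePole δ u).arg - b) h_int,
    integral_eq_zero_of_antiperiodic hanti, mul_zero, zero_mul]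

section Bump

variable {x y h : ℝ}

/-- The uniform probability density on `(x, x + h]`, an approximation of the point mass at `x`. -/
noncomputable def bump (x h : ℝ) : ℝ → ℝ := Set.indicator (Set.Ioc x (x + h)) fun _ ↦ h⁻¹

lemma measurable_bump : Measurable (bump x h) := measurable_const.indicator measurableSet_Ioc

lemma eLpNorm_bump_one (hh : 0 < h) (x : ℝ) : eLpNorm (bump x h) 1 volume = 1 := by
  rw [bump, eLpNorm_indicator_const measurableSet_Ioc one_ne_zero ENNReal.one_ne_top,
    Real.volume_Ioc, add_sub_cancel_left, enorm_of_nonneg (by positivity), ENNReal.toReal_one,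
    div_one, ENNReal.rpow_one, ← ENNReal.ofReal_mul (by positivity), inv_mul_cancel₀ hh.ne',
    ENNReal.ofReal_one]

lemma integral_mul_bump (hh : 0 ≤ h) (hx : -π ≤ x) (hxh : x + h ≤ π) (g : ℝ → ℝ) :
    ∫ t, g t * bump x h t ∂periodMeasure = h⁻¹ * ∫ t in x..x + h, g t := by
  have hmul (t : ℝ) : g t * bump x h t
      = (Set.Ioc x (x + h)).indicator (fun u ↦ h⁻¹ * g u) t := by
    simp only [bump, Set.indicator_apply, mul_ite, mul_zero, mul_comm]
  simp_rw [hmul]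
  rw [setIntegral_indicator measurableSet_Ioc, Set.Ioc_inter_Ioc, sup_of_le_right hx,
    inf_of_le_right hxh, intervalIntegral.integral_of_le (by linarith), integral_const_mul]

lemma tendsto_inv_mul_integral {g : ℝ → ℝ} (hg : Continuous g) (x : ℝ) :
    Tendsto (fun h ↦ h⁻¹ * ∫ t in x..x + h, g t) (nhdsWithin 0 (Set.Ioi 0)) (nhds (g x)) := by
  have hderiv := hasDerivAt_iff_tendsto_slope_zero.1 (intervalIntegral.integral_hasDerivAt_right
    (hg.intervalIntegrable x x) (hg.stronglyMeasurableAtFilter _ _) hg.continuousAt)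
  simpa using! hderiv.mono_left (nhdsWithin_mono 0 fun h hh ↦ (Set.mem_Ioi.1 hh).ne')

/-- Half the difference of the uniform densities on `(x, x + h]` and `(y, y + h]`: a mean-zero
function of `L_1` norm at most `1` that approximately evaluates `(g x - g y) / 2`. -/
noncomputable def dipole (x y h t : ℝ) : ℝ := 2⁻¹ * (bump x h t - bump y h t)

lemma measurable_dipole : Measurable (dipole x y h) :=
  (measurable_bump.sub measurable_bump).const_mul _

lemma eLpNorm_dipole_one_le (hh : 0 < h) (x y : ℝ) : eLpNorm (dipole x y h) 1 volume ≤ 1 := by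
  calc eLpNorm ((2⁻¹ : ℝ) • (bump x h - bump y h)) 1 volume
    _ = 2⁻¹ * eLpNorm (bump x h - bump y h) 1 volume := by
      rw [eLpNorm_const_smul, enorm_inv two_ne_zero, enorm_eq_nnnorm, nnnorm_ofNat]
      rfl
    _ ≤ 2⁻¹ * (1 + 1) := by
      gcongr
      refine (eLpNorm_sub_le measurable_bump.aestronglyMeasurable
        measurable_bump.aestronglyMeasurable le_rfl).trans_eq ?_
      rw [eLpNorm_bump_one hh, eLpNorm_bump_one hh]
    _ = 1 := by rw [one_add_one_eq_two, ENNReal.inv_mul_cancel two_ne_zero ENNReal.ofNat_ne_top]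

lemma integral_mul_dipole {g : ℝ → ℝ} (hg : Continuous g) (hh : 0 < h) (hx : -π ≤ x)
    (hxh : x + h ≤ π) (hy : -π ≤ y) (hyh : y + h ≤ π) :
    ∫ t, g t * dipole x y h t ∂periodMeasure
      = 2⁻¹ * ((h⁻¹ * ∫ t in x..x + h, g t) - h⁻¹ * ∫ t in y..y + h, g t) := by
  have h_int (z : ℝ) : Integrable (fun t ↦ g t * bump z h t) periodMeasure := by
    have hbump : MemLp (bump z h) 1 periodMeasure :=
      MemLp.restrict _ ⟨measurable_bump.aestronglyMeasurable, by simp [eLpNorm_bump_one hh]⟩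
    exact (hbump.mul (r := 1) (memLp_periodMeasure_of_continuous hg ∞)).integrable le_rfl
  simp_rw [dipole, mul_left_comm (g _), mul_sub]
  rw [integral_sub ((h_int x).const_mul _) ((h_int y).const_mul _), integral_const_mul,
    integral_const_mul, integral_mul_bump hh.le hx hxh, integral_mul_bump hh.le hy hyh]

lemma exists_sub_div_two_le_integral_mul {g : ℝ → ℝ} (hg : Continuous g)
    (hx : x ∈ Set.Ico (-π) π) (hy : y ∈ Set.Ico (-π) π) {η : ℝ} (hη : 0 < η) :
    ∃ φ : ℝ → ℝ, Measurable φ ∧ eLpNorm φ 1 periodMeasure ≤ 1 ∧ ∫ t, φ t ∂periodMeasure = 0 ∧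
      (g x - g y) / 2 - η ≤ ∫ t, g t * φ t ∂periodMeasure := by
  have hlimit : Tendsto
      (fun h ↦ 2⁻¹ * ((h⁻¹ * ∫ t in x..x + h, g t) - h⁻¹ * ∫ t in y..y + h, g t))
      (nhdsWithin 0 (Set.Ioi 0)) (nhds (2⁻¹ * (g x - g y))) :=
    ((tendsto_inv_mul_integral hg x).sub (tendsto_inv_mul_integral hg y)).const_mul _
  have hroom {z : ℝ} (hz : z ∈ Set.Ico (-π) π) :
      ∀ᶠ h in nhdsWithin (0 : ℝ) (Set.Ioi 0), z + h ≤ π := by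
    filter_upwards [nhdsWithin_le_nhds (eventually_le_nhds (sub_pos.2 hz.2))] with h hh
    linarith
  obtain ⟨h, hclose, hxh, hyh, hh⟩ := ((hlimit.eventually_const_le
    (sub_lt_self _ hη)).and ((hroom hx).and ((hroom hy).and self_mem_nhdsWithin))).exists
  refine ⟨dipole x y h, measurable_dipole,
    (eLpNorm_restrict_le _ _ _ _).trans (eLpNorm_dipole_one_le hh x y), ?_, ?_⟩
  · simpa using integral_mul_dipole (g := fun _ ↦ 1) continuous_const hh hx.1 hxh hy.1 hyh
  · rw [integral_mul_dipole hg hh hx.1 hxh hy.1 hyh]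
    linarith

end Bump

lemma exists_stepWave_eq_norm_mul_cos {n : ℕ} (hn : 0 < n) {τ : ℝ} (hτ : τ ∈ Set.Ico (-π) π)
    (δ b u : ℝ) :
    ∃ t ∈ Set.Ico (-π) π, stepWave δ b n t = ‖simplePole δ (leftNode n τ)‖ * cos u := by
  have hn' : (0 : ℝ) < n := Nat.cast_pos.2 hn
  set j := ⌊n * (τ + π) / (2 * π)⌋₊
  have hindex_nonneg : 0 ≤ n * (τ + π) / (2 * π) :=
    div_nonneg (mul_nonneg hn'.le (by linarith [hτ.1])) two_pi_pos.le
  have hnode : leftNode n τ = -π + 2 * π * j / n := by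
    rw [leftNode, ← natCast_floor_eq_intCast_floor hindex_nonneg]
  have hj : ((j + 1 : ℕ) : ℝ) ≤ n := by
    refine Nat.cast_le.2 (Nat.succ_le_of_lt ((Nat.floor_lt hindex_nonneg).2 ?_))
    rw [div_lt_iff₀ two_pi_pos]
    nlinarith [hτ.2]
  set θ := (simplePole δ (leftNode n τ)).arg - b
  have hper : Function.Periodic (fun t ↦ cos (n * t + θ)) (2 * π / n) := fun t ↦ by
    beta_reduce
    rw [mul_add, mul_div_cancel₀ _ hn'.ne', add_right_comm, cos_add_two_pi]
  obtain ⟨t, ht, hcos⟩ :=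
    hper.exists_mem_Ico (by positivity) ((u - θ) / n) (-π + 2 * π * j / n)
  rw [mul_div_cancel₀ _ hn'.ne', sub_add_cancel] at hcos
  have hcell : t < -π + 2 * π * (j + 1 : ℕ) / n := by
    rw [Nat.cast_add_one, mul_add_one, add_div, ← add_assoc]
    exact ht.2
  refine ⟨t, ⟨le_trans ?_ ht.1, hcell.trans_le ?_⟩, ?_⟩
  · rw [le_add_iff_nonneg_right]
    positivity
  · rw [neg_add_le_iff_le_add, div_le_iff₀ hn']
    nlinarith [pi_pos]
  · rw [stepWave, leftNode_eq hn ⟨ht.1, hcell⟩, ← hnode, hcos]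

lemma norm_le_lpNorm_top_of_continuous {E : Type*} [NormedAddCommGroup E] {f : ℝ → E}
    (hf : Continuous f) {x : ℝ} (hx : x ∈ Set.Ioc (-π) π) :
    ‖f x‖ ≤ lpNorm f ∞ periodMeasure := by
  have hmax : (fun t ↦ max ‖f t‖ (lpNorm f ∞ periodMeasure))
      =ᵐ[periodMeasure] fun _ ↦ lpNorm f ∞ periodMeasure := by
    filter_upwards [ae_le_lpNorm_exponent_top (memLp_periodMeasure_of_continuous hf ∞)] with t ht
    exact max_eq_right ht
  exact max_eq_right_iff.1
    (Measure.eqOn_Ioc_of_ae_eq volume hmax (by fun_prop) continuousOn_const hx)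

lemma lpNorm_simplePole_top {δ : ℝ} (hδ : 0 < δ) :
    lpNorm (simplePole δ) ∞ periodMeasure = 1 / δ := by
  refine le_antisymm ?_ ?_
  · calc lpNorm (simplePole δ) ∞ periodMeasure
      _ ≤ lpNorm (fun _ ↦ 1 / δ) ∞ periodMeasure :=
        lpNorm_mono_real (memLp_const _) (norm_simplePole_le hδ)
      _ = 1 / δ := by
        rw [lpNorm_const ENNReal.top_ne_zero periodMeasure_ne_zero, ENNReal.toReal_top, inv_zero,
          rpow_zero, mul_one, norm_of_nonneg (by positivity)]
  · rw [← norm_simplePole_zero hδ]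
    exact norm_le_lpNorm_top_of_continuous (continuous_simplePole hδ)
      ⟨neg_lt_zero.2 pi_pos, pi_pos.le⟩

lemma cosMean_top : cosMean ∞ = 1 := by
  refine (cosMean_le_one ENNReal.top_ne_zero).antisymm ?_
  rw [cosMean, ENNReal.toReal_top, inv_zero, rpow_zero, div_one, cosNorm_eq_lpNorm]
  simpa using norm_le_lpNorm_top_of_continuous continuous_cos (x := 0)
    ⟨neg_lt_zero.2 pi_pos, pi_pos.le⟩

/-! ### The deviation in terms of the norm of the simple pole -/

/-- The deviation `EnC` divided by `e^{-α n^r} / π`, the factor taken out of the tail of the kernel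
by `normalizedTail`. -/
noncomputable def normalizedDeviation (α r β : ℝ) (p : ℝ≥0∞) (n : ℕ) : ℝ :=
  π * exp (α * (n : ℝ) ^ r) * EnC α r β p n

lemma EnC_eq_mul_normalizedDeviation (α r β : ℝ) (p : ℝ≥0∞) (n : ℕ) :
    EnC α r β p n = exp (-α * (n : ℝ) ^ r) / π * normalizedDeviation α r β p n := by
  rw [normalizedDeviation, neg_mul, exp_neg]
  field_simp

lemma abs_integral_mul_sub_integral_mul_le {Ω : Type*} {mΩ : MeasurableSpace Ω} {μ : Measure Ω}
    {s p : ℝ≥0∞} [ENNReal.HolderConjugate s p] {f g φ : Ω → ℝ} (hf : MemLp f s μ)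
    (hg : MemLp g s μ) (hφ : AEStronglyMeasurable φ μ) (hφ1 : eLpNorm φ p μ ≤ 1) :
    |∫ x, f x * φ x ∂μ - ∫ x, g x * φ x ∂μ| ≤ lpNorm (f - g) s μ := by
  have hφLp : MemLp φ p μ := ⟨hφ, hφ1.trans_lt ENNReal.one_lt_top⟩
  have hφ1' : lpNorm φ p μ ≤ 1 := by
    rw [← toReal_eLpNorm hφ]
    exact ENNReal.toReal_le_of_le_ofReal one_pos.le (by simpa using hφ1)
  have hholder := abs_integral_mul_le_lpNorm_mul_lpNorm (hf.sub hg) hφLp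
  simp_rw [Pi.sub_apply, sub_mul] at hholder
  rw [integral_sub (by exact hf.integrable_mul hφLp) (by exact hg.integrable_mul hφLp)] at hholder
  exact hholder.trans (mul_le_of_le_one_right lpNorm_nonneg hφ1')

lemma lpNorm_stepWave_le {δ : ℝ} (hδ : 0 < δ) (b : ℝ) {n : ℕ} (hn : 0 < n) {s : ℝ≥0∞}
    (hs : s ≠ 0) :
    lpNorm (stepWave δ b n) s periodMeasure
      ≤ cosMean s * lpNorm (simplePole δ ∘ leftNode n) s periodMeasure := by
  rcases eq_or_ne s ∞ with rfl | hs_top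
  · have hpole := memLp_simplePole_comp_leftNode hδ n ∞
    rw [cosMean_top, one_mul, ← lpNorm_norm hpole.1]
    exact lpNorm_mono_real hpole.norm (abs_stepWave_le δ b n)
  · exact (lpNorm_stepWave hδ b hn hs hs_top).le

namespace PoissonRegime

variable {α r : ℝ} {n : ℕ} (h : PoissonRegime α r n) (β : ℝ) {s p : ℝ≥0∞}
include h

lemma continuous_normalizedTail : Continuous (normalizedTail α r β n) :=
  (continuous_poissonTail h.alpha_pos h.r_pos β (n - 1)).const_mul _

lemma normalizedDeviation_le [ENNReal.HolderConjugate s p] :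
    normalizedDeviation α r β p n ≤ lpNorm (normalizedTail α r β n) s periodMeasure := by
  have hle := EnC_le (s := s) (p := p) h.alpha_pos h.r_pos β h.r_lt_one.le n
  unfold normalizedTail
  rw [lpNorm_const_mul, abs_of_pos (exp_pos _), normalizedDeviation, mul_comm π, mul_assoc]
  gcongr
  rwa [one_div, le_inv_mul_iff₀ pi_pos] at hle

lemma integral_normalizedTail_mul_le (hp : 1 ≤ p) {φ : ℝ → ℝ} (hφ : Measurable φ)
    (hφ1 : eLpNorm φ p periodMeasure ≤ 1) (hφ0 : ∫ t, φ t ∂periodMeasure = 0) :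
    ∫ t, normalizedTail α r β n t * φ t ∂periodMeasure ≤ normalizedDeviation α r β p n := by
  have hle := le_EnC h.alpha_pos h.r_pos β h.r_lt_one.le hp hφ hφ1 hφ0 n
  simp_rw [normalizedTail, mul_assoc]
  rw [integral_const_mul, normalizedDeviation, mul_comm π, mul_assoc]
  gcongr
  rwa [one_div, inv_mul_le_iff₀ pi_pos] at hle

lemma normalizedDeviation_le_add [hsp : ENNReal.HolderConjugate s p] :
    normalizedDeviation α r β p n
      ≤ cosMean s * lpNorm (simplePole (decayRate α r n)) s periodMeasure
        + ((4 + 4 * π) * relError α r n * lpNorm (simplePole (decayRate α r n)) s periodMeasure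
          + 12 * π) := by
  have hs : 1 ≤ s := hsp.one_le
  have htail := memLp_periodMeasure_of_continuous (h.continuous_normalizedTail β) s
  have hwave := memLp_stepWave h.rate_pos (β * π / 2) n s
  have herror := h.lpNorm_normalizedTail_sub_stepWave_le hs β
  have hnode := (abs_le.1 (h.abs_lpNorm_simplePole_comp_leftNode_sub_le hs)).2
  set Y := lpNorm (simplePole (decayRate α r n)) s periodMeasure
  have hnode_error : 0 ≤ 2 * π * relError α r n * Y :=
    mul_nonneg (by have := h.error_pos; positivity) lpNorm_nonneg
  calc normalizedDeviation α r β p n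
    _ ≤ lpNorm (normalizedTail α r β n) s periodMeasure := h.normalizedDeviation_le β
    _ ≤ lpNorm (stepWave (decayRate α r n) (β * π / 2) n) s periodMeasure
        + ((4 + 2 * π) * relError α r n * Y + 12 * π) := by
      have htriangle := (le_abs_self _).trans (abs_lpNorm_sub_lpNorm_le htail hwave hs)
      linarith
    _ ≤ cosMean s * (Y + 2 * π * relError α r n * Y)
        + ((4 + 2 * π) * relError α r n * Y + 12 * π) := by
      gcongr
      refine (lpNorm_stepWave_le h.rate_pos _ h.n_pos (one_pos.trans_le hs).ne').trans ?_
      exact mul_le_mul_of_nonneg_left (by linarith) (cosMean_nonneg s)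
    _ ≤ _ := by
      have hcos := mul_le_of_le_one_left hnode_error (cosMean_le_one (one_pos.trans_le hs).ne')
      linarith

lemma sub_le_normalizedDeviation_of_ne_top [hsp : ENNReal.HolderConjugate s p] (hs_top : s ≠ ∞) :
    cosMean s * lpNorm (simplePole (decayRate α r n)) s periodMeasure
        - ((4 + 4 * π) * relError α r n * lpNorm (simplePole (decayRate α r n)) s periodMeasure
          + 12 * π)
      ≤ normalizedDeviation α r β p n := by
  have hs : 1 ≤ s := hsp.one_le
  have htail := memLp_periodMeasure_of_continuous (h.continuous_normalizedTail β) s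
  have hwave := memLp_stepWave h.rate_pos (β * π / 2) n s
  have herror := h.lpNorm_normalizedTail_sub_stepWave_le hs β
  have hnode := (abs_le.1 (h.abs_lpNorm_simplePole_comp_leftNode_sub_le hs)).1
  set Y := lpNorm (simplePole (decayRate α r n)) s periodMeasure
  set w := stepWave (decayRate α r n) (β * π / 2) n
  have hnode_error : 0 ≤ 2 * π * relError α r n * Y :=
    mul_nonneg (by have := h.error_pos; positivity) lpNorm_nonneg
  obtain ⟨φ, hφ, hφ1, hφ0, hφw⟩ := exists_integral_mul_eq_lpNorm (p := p) hs_top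
    (measurable_stepWave h.rate_pos (β * π / 2) n) hwave
    (integral_normingFun_stepWave h.rate_pos _ h.n_pos hs hs_top)
  have hholder := (abs_le.1 (abs_integral_mul_sub_integral_mul_le htail hwave
    hφ.aestronglyMeasurable hφ1)).1
  have hlower := h.integral_normalizedTail_mul_le β hsp.symm.one_le hφ hφ1 hφ0
  rw [hφw, lpNorm_stepWave h.rate_pos _ h.n_pos (one_pos.trans_le hs).ne' hs_top] at hholder
  have hcos := mul_le_of_le_one_left hnode_error (cosMean_le_one (one_pos.trans_le hs).ne')
  have hmain := mul_le_mul_of_nonneg_left hnode (cosMean_nonneg s)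
  linarith

lemma sub_le_normalizedDeviation_one :
    1 / decayRate α r n - ((4 + 4 * π) * relError α r n * (1 / decayRate α r n) + 12 * π)
      ≤ normalizedDeviation α r β 1 n := by
  set δ := decayRate α r n
  have hδ : 0 < δ := h.rate_pos
  have hε := h.error_pos
  have hzero : (0 : ℝ) ∈ Set.Ico (-π) π := ⟨neg_nonpos.2 pi_pos.le, pi_pos⟩
  obtain ⟨x, hx, hwave_x⟩ := exists_stepWave_eq_norm_mul_cos h.n_pos hzero δ (β * π / 2) 0
  obtain ⟨y, hy, hwave_y⟩ := exists_stepWave_eq_norm_mul_cos h.n_pos hzero δ (β * π / 2) π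
  rw [cos_zero, mul_one] at hwave_x
  rw [cos_pi, mul_neg_one] at hwave_y
  have hcrest : 1 / δ - 2 * π * relError α r n * (1 / δ) ≤ ‖simplePole δ (leftNode n 0)‖ := by
    have hclose := (norm_sub_norm_le _ _).trans (norm_simplePole_sub_leftNode_le hδ h.n_pos 0)
    rw [norm_simplePole_zero hδ, ← h.error_eq] at hclose
    linarith
  have herror {t : ℝ} (ht : t ∈ Set.Ico (-π) π) :
      |normalizedTail α r β n t - stepWave δ (β * π / 2) n t|
        ≤ 6 + (4 + 2 * π) * relError α r n * (1 / δ) := by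
    refine (h.abs_normalizedTail_sub_stepWave_le β (abs_le.2 ⟨ht.1, ht.2.le⟩)).trans ?_
    gcongr
    exact norm_simplePole_le hδ t
  refine le_of_forall_pos_sub_le fun η hη ↦ ?_
  obtain ⟨φ, hφ, hφ1, hφ0, hφpair⟩ :=
    exists_sub_div_two_le_integral_mul (h.continuous_normalizedTail β) hx hy hη
  have hlower := hφpair.trans (h.integral_normalizedTail_mul_le β le_rfl hφ hφ1 hφ0)
  have herror_x := (abs_le.1 (herror hx)).1
  have herror_y := (abs_le.1 (herror hy)).2
  linarith [pi_gt_three]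

lemma sub_le_normalizedDeviation [hsp : ENNReal.HolderConjugate s p] :
    cosMean s * lpNorm (simplePole (decayRate α r n)) s periodMeasure
        - ((4 + 4 * π) * relError α r n * lpNorm (simplePole (decayRate α r n)) s periodMeasure
          + 12 * π)
      ≤ normalizedDeviation α r β p n := by
  rcases eq_or_ne s ∞ with rfl | hs_top
  · obtain rfl : p = 1 := by simpa using hsp.inv_add_inv_eq_inv
    rw [cosMean_top, one_mul, lpNorm_simplePole_top h.rate_pos]
    exact h.sub_le_normalizedDeviation_one β
  · exact h.sub_le_normalizedDeviation_of_ne_top β hs_top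

lemma abs_normalizedDeviation_sub_le [ENNReal.HolderConjugate s p] :
    |normalizedDeviation α r β p n
        - cosMean s * lpNorm (simplePole (decayRate α r n)) s periodMeasure|
      ≤ (4 + 4 * π) * relError α r n * lpNorm (simplePole (decayRate α r n)) s periodMeasure
        + 12 * π := by
  have hupper := h.normalizedDeviation_le_add (s := s) (p := p) β
  have hlower := h.sub_le_normalizedDeviation (s := s) (p := p) β
  rw [abs_le]
  constructor <;> linarith

end PoissonRegime

/-! ### Rescaling to the function `Jfun` -/

lemma map_div_restrict_Ioc {δ : ℝ} (hδ : 0 < δ) (a b : ℝ) :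
    (volume.restrict (Set.Ioc a b)).map (· / δ)
      = ENNReal.ofReal δ • volume.restrict (Set.Ioc (a / δ) (b / δ)) := by
  have hpre : (δ⁻¹ * ·) ⁻¹' Set.Ioc (a / δ) (b / δ) = Set.Ioc a b := by
    rw [Set.preimage_const_mul_Ioc₀ _ _ (inv_pos.2 hδ), div_inv_eq_mul, div_inv_eq_mul,
      div_mul_cancel₀ _ hδ.ne', div_mul_cancel₀ _ hδ.ne']
  have hdiv : (· / δ) = (δ⁻¹ * ·) := funext fun t ↦ div_eq_inv_mul t δ
  rw [hdiv, ← hpre, ← Measure.restrict_map (measurable_const_mul _) measurableSet_Ioc,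
    Real.map_volume_mul_left (inv_ne_zero hδ.ne'), inv_inv, abs_of_pos hδ, Measure.restrict_smul]

lemma map_abs_restrict_Ioc {a : ℝ} (ha : 0 ≤ a) :
    (volume.restrict (Set.Ioc (-a) a)).map abs = (2 : ℝ≥0∞) • volume.restrict (Set.Ioc 0 a) := by
  have hright : (volume.restrict (Set.Ioc 0 a)).map abs = volume.restrict (Set.Ioc 0 a) := by
    rw [Measure.map_congr (g := id), Measure.map_id]
    filter_upwards [ae_restrict_mem measurableSet_Ioc] with t ht
    exact abs_of_pos ht.1
  have hleft : (volume.restrict (Set.Ioc (-a) 0)).map abs = volume.restrict (Set.Ioc 0 a) := by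
    have hneg : (volume.restrict (Set.Ioc (-a) 0)).map abs
        = (volume.restrict (Set.Ioc (-a) 0)).map Neg.neg := by
      refine Measure.map_congr ?_
      filter_upwards [ae_restrict_mem measurableSet_Ioc] with t ht
      exact abs_of_nonpos ht.2
    have hpre : Neg.neg ⁻¹' Set.Ico 0 a = Set.Ioc (-a) 0 := by simp
    rw [hneg, ← hpre, ← Measure.restrict_map measurable_neg measurableSet_Ico,
      Measure.map_neg_eq_self, Measure.restrict_congr_set Ico_ae_eq_Ioc]
  rw [← Set.Ioc_union_Ioc_eq_Ioc (neg_nonpos.2 ha) ha,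
    Measure.restrict_union (Set.Ioc_disjoint_Ioc_of_le le_rfl) measurableSet_Ioc,
    Measure.map_add _ _ continuous_abs.measurable, hleft, hright, two_smul]

lemma norm_simplePole_eq {δ : ℝ} (hδ : 0 < δ) (t : ℝ) :
    ‖simplePole δ t‖ = δ⁻¹ * (1 / √((|t| / δ) ^ 2 + 1)) := by
  have hsq : δ ^ 2 + t ^ 2 = δ ^ 2 * ((|t| / δ) ^ 2 + 1) := by
    rw [div_pow, sq_abs]
    field_simp
    ring
  have hnorm : ‖(δ : ℂ) - t * Complex.I‖ = δ * √((|t| / δ) ^ 2 + 1) := by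
    rw [← sqrt_sq hδ.le, ← sqrt_mul (sq_nonneg δ), sqrt_sq hδ.le, ← hsq]
    simpa [sub_eq_add_neg] using Complex.norm_add_mul_I δ (-t)
  rw [simplePole, norm_inv, hnorm, mul_inv, one_div]

lemma lpNorm_simplePole {δ : ℝ} (hδ : 0 < δ) (s : ℝ≥0∞) :
    lpNorm (simplePole δ) s periodMeasure = δ⁻¹ * (2 * δ) ^ (1 / s.toReal) * Jfun s (π / δ) := by
  set G : ℝ → ℝ := fun u ↦ 1 / √(u ^ 2 + 1)
  have hG : Measurable G := by fun_prop
  have hmap : periodMeasure.map (fun t ↦ |t| / δ)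
      = ENNReal.ofReal (2 * δ) • volume.restrict (Set.Ioc 0 (π / δ)) := by
    have hcomp : (fun t : ℝ ↦ |t| / δ) = (· / δ) ∘ abs := rfl
    have hdiv : Measurable (· / δ) := measurable_id.div_const δ
    rw [hcomp, ← Measure.map_map hdiv continuous_abs.measurable, periodMeasure,
      map_abs_restrict_Ioc pi_pos.le, Measure.map_smul, map_div_restrict_Ioc hδ, zero_div,
      smul_smul, ENNReal.ofReal_mul zero_le_two, ENNReal.ofReal_ofNat]
  have hδ2 : ENNReal.ofReal (2 * δ) ≠ 0 := (ENNReal.ofReal_pos.2 (by positivity)).ne'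
  calc lpNorm (simplePole δ) s periodMeasure
    _ = lpNorm (fun t ↦ δ⁻¹ * G (|t| / δ)) s periodMeasure := by
      rw [← lpNorm_norm (memLp_simplePole hδ s).1]
      exact congrArg (lpNorm · s periodMeasure) (funext (norm_simplePole_eq hδ))
    _ = δ⁻¹ * (eLpNorm G s (periodMeasure.map fun t ↦ |t| / δ)).toReal := by
      rw [lpNorm_const_mul, abs_of_pos (inv_pos.2 hδ),
        eLpNorm_map_measure hG.aestronglyMeasurable (by fun_prop),
        toReal_eLpNorm (hG.comp (by fun_prop)).aestronglyMeasurable]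
      rfl
    _ = δ⁻¹ * (2 * δ) ^ (1 / s.toReal) * Jfun s (π / δ) := by
      rw [hmap, eLpNorm_smul_measure_of_ne_zero hδ2, smul_eq_mul, ENNReal.toReal_mul,
        ← ENNReal.toReal_rpow, ENNReal.toReal_ofReal (by positivity), ENNReal.toReal_div,
        ENNReal.toReal_one, ← mul_assoc]
      rfl

lemma one_div_toReal_add_one_div_toReal (s p : ℝ≥0∞) [hsp : ENNReal.HolderConjugate s p] :
    1 / s.toReal + 1 / p.toReal = 1 := by
  have hs : s⁻¹ ≠ ∞ := ENNReal.inv_ne_top.2 (one_pos.trans_le hsp.one_le).ne'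
  have hp : p⁻¹ ≠ ∞ := ENNReal.inv_ne_top.2 (one_pos.trans_le hsp.symm.one_le).ne'
  simpa [ENNReal.toReal_add hs hp, ENNReal.toReal_inv] using
    congrArg ENNReal.toReal (ENNReal.HolderConjugate.inv_add_inv_eq_one s p)

lemma lpNorm_simplePole_of_holderConjugate {δ : ℝ} (hδ : 0 < δ) (s p : ℝ≥0∞)
    [ENNReal.HolderConjugate s p] :
    lpNorm (simplePole δ) s periodMeasure
      = 2 ^ (1 / s.toReal) * (δ ^ (-(1 / p.toReal)) * Jfun s (π / δ)) := by
  have hexp : -(1 / p.toReal) = 1 / s.toReal - 1 := by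
    linarith [one_div_toReal_add_one_div_toReal s p]
  rw [lpNorm_simplePole hδ, hexp, rpow_sub_one hδ.ne', mul_rpow zero_le_two hδ.le]
  ring

namespace PoissonRegime

variable {α r : ℝ} {n : ℕ} (h : PoissonRegime α r n) (β : ℝ) (p s : ℝ≥0∞)
include h

lemma abs_normalizedDeviation_sub_Jfun_le [ENNReal.HolderConjugate s p] :
    |normalizedDeviation α r β p n - cosNorm s * π ^ (-(1 / s.toReal))
        * (decayRate α r n ^ (-(1 / p.toReal)) * Jfun s (π / decayRate α r n))|
      ≤ 12 * (π * (relError α r n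
        * (decayRate α r n ^ (-(1 / p.toReal)) * Jfun s (π / decayRate α r n)) + 1)) := by
  have hδ := h.rate_pos
  have hε := h.error_pos
  have hdev := h.abs_normalizedDeviation_sub_le (s := s) (p := p) β
  rw [lpNorm_simplePole_of_holderConjugate hδ s p] at hdev
  have hJ : 0 ≤ Jfun s (π / decayRate α r n) := ENNReal.toReal_nonneg
  set Z := decayRate α r n ^ (-(1 / p.toReal)) * Jfun s (π / decayRate α r n)
  have hZ : 0 ≤ Z := by positivity
  have htwo : (2 : ℝ) ^ (1 / s.toReal) ≤ 2 := by
    refine rpow_le_self_of_one_le one_le_two ?_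
    linarith [one_div_toReal_add_one_div_toReal s p, one_div_nonneg.2 p.toReal_nonneg]
  have hmain : cosMean s * (2 ^ (1 / s.toReal) * Z) = cosNorm s * π ^ (-(1 / s.toReal)) * Z := by
    rw [cosMean, mul_rpow zero_le_two pi_pos.le, rpow_neg pi_pos.le, ← one_div]
    field_simp
  rw [hmain] at hdev
  calc _ ≤ (4 + 4 * π) * relError α r n * (2 ^ (1 / s.toReal) * Z) + 12 * π := hdev
    _ ≤ (4 + 4 * π) * relError α r n * (2 * Z) + 12 * π := by gcongr
    _ = (8 + 8 * π) * (relError α r n * Z) + 12 * π := by ring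
    _ ≤ 12 * π * (relError α r n * Z) + 12 * π := by
      gcongr
      linarith [pi_gt_three]
    _ = 12 * (π * (relError α r n * Z + 1)) := by ring

lemma pi_mul_rpow_div_eq : π * (n : ℝ) ^ (1 - r) / (α * r) = π / decayRate α r n := by
  have hα := h.alpha_pos
  have hr := h.r_pos
  have hn := h.cast_pos
  rw [decayRate, rpow_neg hn.le]
  field_simp

lemma decayRate_rpow_mul_eq (q : ℝ) :
    decayRate α r n ^ (-(1 / q)) * (α * r) ^ (1 / q) = (n : ℝ) ^ ((1 - r) / q) := by
  have har : 0 < α * r := mul_pos h.alpha_pos h.r_pos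
  have hn := h.cast_pos
  rw [decayRate, mul_rpow har.le (by positivity), ← rpow_mul hn.le, rpow_neg har.le,
    neg_mul_neg, mul_one_div]
  field_simp

end PoissonRegime

/-! ### The threshold `n₀` -/

section Threshold

variable {p : ℝ≥0∞}

/-- The right-hand side of the condition that defines `n₀`. -/
noncomputable def smallnessBound (p : ℝ≥0∞) : ℝ :=
  if p = 1 then 1 / 14 else if p = ∞ then 1 / (3 * π) ^ 3
    else (1 / (3 * π) ^ 3) * (p.toReal - 1) / p.toReal

/-- The function `χ(p)` of the condition that defines `n₀`. -/
noncomputable def finiteExponent (p : ℝ≥0∞) : ℝ := if p = ∞ then 1 else p.toReal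

lemma one_le_finiteExponent (hp : 1 ≤ p) : 1 ≤ finiteExponent p := by
  rw [finiteExponent]
  split_ifs with hp_top
  · exact le_rfl
  · exact ENNReal.toReal_one ▸ ENNReal.toReal_mono hp_top hp

lemma smallnessBound_pos (hp : 1 ≤ p) : 0 < smallnessBound p := by
  rw [smallnessBound]
  split_ifs with hp_one hp_top
  · norm_num
  · positivity
  · have hq : 1 < p.toReal := by
      rw [← ENNReal.toReal_one]
      exact ENNReal.toReal_strict_mono hp_top (hp.lt_of_ne' hp_one)
    exact div_pos (mul_pos (by positivity) (sub_pos.2 hq)) (one_pos.trans hq)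

lemma smallnessBound_le (p : ℝ≥0∞) : smallnessBound p ≤ 1 / 14 := by
  have hcube : 1 / (3 * π) ^ 3 ≤ 1 / 14 := by
    refine one_div_le_one_div_of_le (by norm_num) ?_
    calc (14 : ℝ) ≤ (3 * 3) ^ 3 := by norm_num
      _ ≤ (3 * π) ^ 3 := by
        gcongr
        exact pi_gt_three.le
  rw [smallnessBound]
  split_ifs
  · exact le_rfl
  · exact hcube
  · rw [mul_div_assoc]
    refine (mul_le_of_le_one_right (by positivity) ?_).trans hcube
    exact div_le_one_of_le₀ (by linarith) p.toReal_nonneg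

variable {α r : ℝ}

lemma relError_le_of_le (hα : 0 ≤ α) (hr : 0 ≤ r) {m n : ℕ} (hm : 0 < m) (hmn : m ≤ n) :
    relError α r n ≤ relError α r m := by
  rw [relError, relError]
  gcongr 1 / (α * r) * ?_
  exact rpow_le_rpow_of_nonpos (Nat.cast_pos.2 hm) (Nat.cast_le.2 hmn) (neg_nonpos.2 hr)

lemma decayRate_le_of_le (hα : 0 ≤ α) (hr0 : 0 ≤ r) (hr1 : r ≤ 1) {m n : ℕ} (hm : 0 < m)
    (hmn : m ≤ n) :
    decayRate α r n ≤ decayRate α r m := by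
  rw [decayRate, decayRate]
  gcongr α * r * ?_
  exact rpow_le_rpow_of_nonpos (Nat.cast_pos.2 hm) (Nat.cast_le.2 hmn) (by linarith)

lemma n₀_spec (hr0 : 0 < r) (hr1 : r < 1) (hp : 1 ≤ p) : 0 < n₀ α r p ∧
    relError α r (n₀ α r p) + finiteExponent p * decayRate α r (n₀ α r p) ≤ smallnessBound p := by
  have hlim {q : ℝ} (hq : 0 < q) : Tendsto (fun n : ℕ ↦ (n : ℝ) ^ (-q)) atTop (nhds 0) :=
    (tendsto_rpow_neg_atTop hq).comp tendsto_natCast_atTop_atTop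
  have hsum := ((hlim hr0).const_mul (1 / (α * r))).add
    ((hlim (sub_pos.2 hr1)).const_mul (α * r * finiteExponent p))
  rw [mul_zero, mul_zero, add_zero] at hsum
  obtain ⟨m, hm, hm_pos⟩ := ((hsum.eventually_le_const (smallnessBound_pos hp)).and
    (eventually_gt_atTop 0)).exists
  obtain ⟨hpos, hle⟩ : n₀ α r p ∈ {n : ℕ | 0 < n ∧ 1 / (α * r) * (n : ℝ) ^ (-r)
      + α * r * finiteExponent p * (n : ℝ) ^ (-(1 - r)) ≤ smallnessBound p} :=
    Nat.sInf_mem ⟨m, hm_pos, hm⟩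
  refine ⟨hpos, le_of_eq_of_le ?_ hle⟩
  rw [relError, decayRate]
  ring

lemma poissonRegime_of_n₀_le (hα : 0 < α) (hr0 : 0 < r) (hr1 : r < 1) (hp : 1 ≤ p) {n : ℕ}
    (hn : n₀ α r p ≤ n) : PoissonRegime α r n := by
  obtain ⟨hpos, hsmall⟩ := n₀_spec (α := α) hr0 hr1 hp
  set N := n₀ α r p
  have hrate : 0 ≤ decayRate α r N := by
    rw [decayRate]
    positivity
  have herror : 0 ≤ relError α r N := by
    rw [relError]
    positivity
  have hweight := le_mul_of_one_le_left hrate (one_le_finiteExponent hp)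
  have hbound := smallnessBound_le p
  exact
    { alpha_pos := hα
      r_pos := hr0
      r_lt_one := hr1
      n_pos := hpos.trans_le hn
      rate_le := (decayRate_le_of_le hα.le hr0.le hr1.le hpos hn).trans (by linarith)
      error_le := (relError_le_of_le hα.le hr0.le hpos hn).trans (by linarith) }

end Threshold

theorem statement0_general (α r β : ℝ) (p p' : ℝ≥0∞) [ENNReal.HolderConjugate p' p] (n : ℕ)
    (h : PoissonRegime α r n) :
    ∃ γ : ℝ, |γ| ≤ 12 ∧
      EnC α r β p n =
        exp (-α * (n : ℝ) ^ r) * (n : ℝ) ^ ((1 - r) / p.toReal) *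
          (cosNorm p' / (π ^ ((1 : ℝ) + 1 / p'.toReal) * (α * r) ^ (1 / p.toReal)) *
              Jfun p' (π * (n : ℝ) ^ (1 - r) / (α * r)) +
            γ * (1 / (α * r) ^ ((1 : ℝ) + 1 / p.toReal) *
                  Jfun p' (π * (n : ℝ) ^ (1 - r) / (α * r)) * (n : ℝ) ^ (-r) +
                (n : ℝ) ^ (-((1 - r) / p.toReal)))) := by
  have har : 0 < α * r := mul_pos h.alpha_pos h.r_pos
  have hn := h.cast_pos
  have hδ := h.rate_pos
  have hε := h.error_pos
  have hdev := h.abs_normalizedDeviation_sub_Jfun_le β p p'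
  have hJ : 0 ≤ Jfun p' (π / decayRate α r n) := ENNReal.toReal_nonneg
  set Z := decayRate α r n ^ (-(1 / p.toReal)) * Jfun p' (π / decayRate α r n) with hZ
  set M := cosNorm p' * π ^ (-(1 / p'.toReal)) * Z with hM
  set D := π * (relError α r n * Z + 1) with hD
  have hD_pos : 0 < D := by positivity
  refine ⟨(normalizedDeviation α r β p n - M) / D, ?_, ?_⟩
  · rwa [abs_div, abs_of_pos hD_pos, div_le_iff₀ hD_pos]
  · generalize hγ : (normalizedDeviation α r β p n - M) / D = γ
    have hdecomp : normalizedDeviation α r β p n = M + γ * D := by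
      rw [← hγ, div_mul_cancel₀ _ hD_pos.ne', add_sub_cancel]
    rw [EnC_eq_mul_normalizedDeviation, hdecomp, hM, hD, hZ, relError, h.pi_mul_rpow_div_eq,
      rpow_neg pi_pos.le, rpow_add pi_pos, rpow_add har, rpow_one, rpow_one,
      rpow_neg hn.le ((1 - r) / p.toReal), ← h.decayRate_rpow_mul_eq]
    field_simp

theorem statement0 (α r β : ℝ) (p p' : ℝ≥0∞)
    (hr0 : 0 < r) (hr1 : r < 1) (hα : 0 < α) (hp : 1 ≤ p)
    (hpp' : 1 / p + 1 / p' = 1) :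
    ∀ n : ℕ, n₀ α r p ≤ n →
      ∃ γ : ℝ, |γ| ≤ (14 * π) ^ 2 ∧
        EnC α r β p n =
          Real.exp (-α * (n : ℝ) ^ r) * (n : ℝ) ^ ((1 - r) / p.toReal) *
            (cosNorm p' / (π ^ ((1 : ℝ) + 1 / p'.toReal) * (α * r) ^ (1 / p.toReal)) *
                Jfun p' (π * (n : ℝ) ^ (1 - r) / (α * r)) +
              γ * (1 / (α * r) ^ ((1 : ℝ) + 1 / p.toReal) *
                    Jfun p' (π * (n : ℝ) ^ (1 - r) / (α * r)) * (n : ℝ) ^ (-r) +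
                  (n : ℝ) ^ (-((1 - r) / p.toReal)))) := by
  intro n hn
  have : ENNReal.HolderConjugate p' p := ⟨by simpa [add_comm] using hpp'⟩
  obtain ⟨γ, hγ, hEnC⟩ :=
    statement0_general α r β p p' n (poissonRegime_of_n₀_le hα hr0 hr1 hp hn)
  have hbound : (12 : ℝ) ≤ (14 * π) ^ 2 := by nlinarith [pi_gt_three]
  exact ⟨γ, hγ.trans hbound, hEnC⟩
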